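/- Let Σ_A(ℕ) be a topologically mixing, finitely primitive (BIP) countable Markov shift, f : Σ_A(ℕ) → ℝ satisfying the Walters condition with Var_1 f < ∞ and P(f) < ∞, admitting a unique maximizing measure. Set g_β := βf + log h_β − log(h_β∘σ) − P(βf) and R_− := f + V − V∘σ − m(f) for a bounded calibrated sub-action V. Then (g_β)/β converges to R_− uniformly on compact sets as β → ∞, and there is a sequence of numbers (M_n) with M_n → 0 such that for all large n and all β: Var_n(g_β/β) ≤ M_n and Var_n(R_−) ≤ M_n; furthermore Var_{n+k}(R_−^n) ≤ Var_{n+k}(S_n f) + M_{n+k} + M_k, where R_−^n = Σ_{j=0}^{n−1} R_−∘σ^j. -/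

import Mathlib

open Filter Topology MeasureTheory
open scoped ENNReal

/-- The countable Markov shift over alphabet ℕ determined by the 0-1 matrix `A`. -/
def MarkovShift (A : ℕ → ℕ → Bool) : Type :=
  {x : ℕ → ℕ // ∀ i, A (x i) (x (i + 1)) = true}

namespace MarkovShift

variable {A : ℕ → ℕ → Bool}

instance : TopologicalSpace (MarkovShift A) :=
  instTopologicalSpaceSubtype

instance : MeasurableSpace (MarkovShift A) := borel _

instance : BorelSpace (MarkovShift A) := ⟨rfl⟩

/-- The shift map. -/
def shift (x : MarkovShift A) : MarkovShift A :=
  ⟨fun n => x.1 (n + 1), fun i => x.2 (i + 1)⟩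

/-- The cylinder set determined by a finite word. -/
def cylinder (w : List ℕ) : Set (MarkovShift A) :=
  {x | ∀ i : Fin w.length, x.1 i = w.get i}

/-- The cylinder set determined by the first `m` coordinates of `x`. -/
def cylOf (x : MarkovShift A) (m : ℕ) : Set (MarkovShift A) :=
  {y | ∀ i < m, y.1 i = x.1 i}

/-- A symbol is admissible when its cylinder is nonempty. -/
def Admissible (A : ℕ → ℕ → Bool) (a : ℕ) : Prop :=
  ∃ x : MarkovShift A, x.1 0 = a

/-- Topologically mixing. -/
def TopologicallyMixing (A : ℕ → ℕ → Bool) : Prop :=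
  ∀ a b : ℕ, Admissible A a → Admissible A b →
    ∃ N : ℕ, ∀ n ≥ N, ∃ x : MarkovShift A, x.1 0 = a ∧ (shift^[n] x).1 0 = b

/-- Finitely primitive (BIP). -/
def FinitelyPrimitive (A : ℕ → ℕ → Bool) : Prop :=
  ∃ (K₀ : ℕ) (F : Finset ℕ), ∀ a b : ℕ, Admissible A a → Admissible A b →
    ∃ w : List ℕ, w.length = K₀ ∧ (∀ c ∈ w, c ∈ F) ∧
      List.Chain' (fun u v => A u v = true) (a :: (w ++ [b]))

/-- First coordinate where two distinct points disagree. -/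
noncomputable def firstDiff (x y : MarkovShift A) (h : x ≠ y) : ℕ :=
  Nat.find (Function.ne_iff.mp (fun hxy : x.1 = y.1 => h (Subtype.ext hxy)))

open Classical in
/-- The metric `d(x,y) = r^{t(x,y)}`. -/
noncomputable def dist' (r : ℝ) (x y : MarkovShift A) : ℝ :=
  if h : x = y then 0 else r ^ firstDiff x y h

/-- Birkhoff sum `S_n f`. -/
def birkhoff (f : MarkovShift A → ℝ) (n : ℕ) (x : MarkovShift A) : ℝ :=
  ∑ j ∈ Finset.range n, f (shift^[j] x)

/-- The set of values `|S_n f x - S_n f y|` over pairs agreeing on the first `m` coordinates. -/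
def varSet (f : MarkovShift A → ℝ) (n m : ℕ) : Set ℝ :=
  {c | ∃ x y : MarkovShift A, (∀ i < m, x.1 i = y.1 i) ∧ c = |birkhoff f n x - birkhoff f n y|}

/-- `Var_m (S_n f)`. -/
noncomputable def varBirk (f : MarkovShift A → ℝ) (n m : ℕ) : ℝ := sSup (varSet f n m)

/-- `Var_1 f < ∞`. -/
def Var1Finite (f : MarkovShift A → ℝ) : Prop := BddAbove (varSet f 1 1)

/-- The set whose supremum is `sup_{n ≥ 1} Var_{n+k}(S_n f)`. -/
def waltersSet (f : MarkovShift A → ℝ) (k : ℕ) : Set ℝ :=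
  {c | ∃ n, 1 ≤ n ∧ c ∈ varSet f n (n + k)}

/-- `M_k = sup_{n ≥ 1} Var_{n+k}(S_n f)`. -/
noncomputable def waltersSup (f : MarkovShift A → ℝ) (k : ℕ) : ℝ := sSup (waltersSet f k)

/-- The Walters condition. -/
def SatisfiesWalters (f : MarkovShift A → ℝ) : Prop :=
  (∀ k, 1 ≤ k → BddAbove (waltersSet f k)) ∧
    Tendsto (fun k => waltersSup f k) atTop (𝓝 0)

/-- The partition function `Z_n(f,a) = Σ_{σ^n x = x, x₀ = a} e^{S_n f (x)}`. -/
noncomputable def partitionSum (f : MarkovShift A → ℝ) (n : ℕ) (a : ℕ) : ℝ :=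
  ∑' x : {x : MarkovShift A // shift^[n] x = x ∧ x.1 0 = a}, Real.exp (birkhoff f n x.1)

/-- `f` has (finite) Gurevich pressure `p`. -/
def HasGurevichPressure (f : MarkovShift A → ℝ) (p : ℝ) : Prop :=
  ∀ a : ℕ, Admissible A a →
    (∀ n, 1 ≤ n → Summable fun x : {x : MarkovShift A // shift^[n] x = x ∧ x.1 0 = a} =>
        Real.exp (birkhoff f n x.1)) ∧
    Tendsto (fun n : ℕ => (1 / (n : ℝ)) * Real.log (partitionSum f n a)) atTop (𝓝 p)

/-- σ-invariant Borel probability measure. -/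
def IsInvariantProb (μ : Measure (MarkovShift A)) : Prop :=
  IsProbabilityMeasure μ ∧ μ.map shift = μ

/-- `m(f)`, the maximal ergodic average. -/
noncomputable def mf (f : MarkovShift A → ℝ) : ℝ :=
  sSup {c | ∃ μ : Measure (MarkovShift A),
    IsInvariantProb μ ∧ Integrable f μ ∧ ∫ x, f x ∂μ = c}

/-- A maximizing measure for `f`. -/
def IsMaximizing (f : MarkovShift A → ℝ) (μ : Measure (MarkovShift A)) : Prop :=
  IsInvariantProb μ ∧ Integrable f μ ∧ ∫ x, f x ∂μ = mf f

/-- Bounded real valued function. -/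
def BoundedFun (g : MarkovShift A → ℝ) : Prop := ∃ C, ∀ x, |g x| ≤ C

/-- A bounded calibrated sub-action for `f`. -/
def IsCalibratedSubaction (f V : MarkovShift A → ℝ) : Prop :=
  Continuous V ∧ BoundedFun V ∧
    (∀ x, f x + V x - V (shift x) - mf f ≤ 0) ∧
    (∀ y, ∃ x, shift x = y ∧ f x + V x - V (shift x) - mf f = 0)

/-- The Ruelle transfer operator `(L_g u)(x) = Σ_{σ y = x} e^{g(y)} u(y)`. -/
noncomputable def ruelle (g u : MarkovShift A → ℝ) (x : MarkovShift A) : ℝ :=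
  ∑' y : {y : MarkovShift A // shift y = x}, Real.exp (g y.1) * u y.1

/-- Ruelle-Perron-Frobenius data for the potential `f` with pressure `p`:
eigenfunction `h`, eigenmeasure `ν`. -/
def IsRPF (f : MarkovShift A → ℝ) (p : ℝ) (h : MarkovShift A → ℝ)
    (ν : Measure (MarkovShift A)) : Prop :=
  Continuous h ∧ (∀ x, 0 < h x) ∧
    (∀ x, ruelle f h x = Real.exp p * h x) ∧
    IsProbabilityMeasure ν ∧
    (∀ g : MarkovShift A → ℝ, Continuous g → BoundedFun g →
      ∫ x, ruelle f g x ∂ν = Real.exp p * ∫ x, g x ∂ν) ∧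
    ∫ x, h x ∂ν = 1

/-- The Gibbs measure `dμ = h dν`. -/
noncomputable def gibbs (h : MarkovShift A → ℝ) (ν : Measure (MarkovShift A)) :
    Measure (MarkovShift A) :=
  ν.withDensity fun x => ENNReal.ofReal (h x)

/-- The Mañé potential `S_f(x,y)` (with respect to the metric of parameter `r`). -/
noncomputable def manePot (r : ℝ) (f : MarkovShift A → ℝ) (x y : MarkovShift A) : EReal :=
  ⨅ ε : {ε : ℝ // 0 < ε}, ⨆ n : {n : ℕ // 1 ≤ n},
    ⨆ _z : {z : MarkovShift A // dist' r x z < ε.1 ∧ shift^[n.1] z = y},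
      ((birkhoff (fun w => f w - mf f) n.1 _z.1 : ℝ) : EReal)

/-- The (topological) support of a measure. -/
def msupport (μ : Measure (MarkovShift A)) : Set (MarkovShift A) :=
  {x | ∀ U : Set (MarkovShift A), IsOpen U → x ∈ U → 0 < μ U}

end MarkovShift

namespace MarkovShift
variable {A : ℕ → ℕ → Bool}

lemma shift_apply (x : MarkovShift A) (i : ℕ) : (shift x).1 i = x.1 (i + 1) := rfl

lemma shift_iter (x : MarkovShift A) (n i : ℕ) : (shift^[n] x).1 i = x.1 (i + n) := by
  induction n generalizing x with
  | zero => rfl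
  | succ n ih => rw [Function.iterate_succ_apply, ih, shift_apply]; congr 1

lemma ms_ext {x y : MarkovShift A} (h : ∀ i, x.1 i = y.1 i) : x = y := Subtype.ext (funext h)

lemma continuous_coord (i : ℕ) : Continuous (fun x : MarkovShift A => x.1 i) :=
  (continuous_apply i).comp continuous_subtype_val

lemma continuous_shift : Continuous (shift : MarkovShift A → MarkovShift A) := by
  refine Continuous.subtype_mk ?_ _
  exact continuous_pi fun i => continuous_coord (i + 1)

lemma isOpen_cylOf (x : MarkovShift A) (n : ℕ) : IsOpen (cylOf x n) := by
  have : cylOf x n = ⋂ i ∈ Set.Iio n, {y : MarkovShift A | y.1 i = x.1 i} := by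
    ext y; simp [cylOf]
  rw [this]
  refine (Set.finite_Iio n).isOpen_biInter fun i _ => ?_
  exact (isOpen_discrete {x.1 i}).preimage (continuous_coord i)

lemma isClosed_cylOf (x : MarkovShift A) (n : ℕ) : IsClosed (cylOf x n) := by
  have : cylOf x n = ⋂ i ∈ Set.Iio n, {y : MarkovShift A | y.1 i = x.1 i} := by
    ext y; simp [cylOf]
  rw [this]
  refine isClosed_biInter fun i _ => ?_
  exact (isClosed_discrete {x.1 i}).preimage (continuous_coord i)

lemma self_mem_cylOf (x : MarkovShift A) (n : ℕ) : x ∈ cylOf x n := fun _ _ => rfl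

lemma cylOf_mem_nhds (x : MarkovShift A) (n : ℕ) : cylOf x n ∈ 𝓝 x :=
  (isOpen_cylOf x n).mem_nhds (self_mem_cylOf x n)

/-- Cylinders form a neighbourhood basis. -/
lemma exists_cylOf_subset {x : MarkovShift A} {U : Set (MarkovShift A)} (hU : U ∈ 𝓝 x) :
    ∃ n, cylOf x n ⊆ U := by
  obtain ⟨T, hT, hTU⟩ := (mem_nhds_induced Subtype.val x U).1 hU
  rw [nhds_pi, Filter.mem_pi] at hT
  obtain ⟨I, hI, t, ht, hsub⟩ := hT
  obtain ⟨N, hN⟩ := hI.bddAbove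
  refine ⟨N + 1, fun y hy => hTU (hsub fun i hi => ?_)⟩
  have : y.1 i = x.1 i := hy i (Nat.lt_succ_of_le (hN hi))
  change y.1 i ∈ t i
  rw [this]
  exact mem_of_mem_nhds (ht i)

lemma continuous_of_modulus (u : MarkovShift A → ℝ) (m : ℕ → ℝ) (hm : Tendsto m atTop (𝓝 0))
    (N : ℕ) (h : ∀ k, N ≤ k → ∀ x y : MarkovShift A, (∀ i < k, x.1 i = y.1 i) → |u x - u y| ≤ m k) :
    Continuous u := by
  rw [continuous_iff_continuousAt]
  intro x
  rw [ContinuousAt, Metric.tendsto_nhds]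
  intro ε hε
  obtain ⟨k, hk, hk1⟩ := ((hm.eventually_lt_const hε).and (eventually_ge_atTop N)).exists
  filter_upwards [cylOf_mem_nhds x k] with y hy
  rw [Real.dist_eq]
  exact (h k hk1 y x hy).trans_lt hk

lemma continuous_of_locally_const (u : MarkovShift A → ℝ) (n : ℕ)
    (h : ∀ x y : MarkovShift A, (∀ i < n, x.1 i = y.1 i) → u x = u y) : Continuous u := by
  rw [continuous_iff_continuousAt]
  intro x
  have : u =ᶠ[𝓝 x] fun _ => u x := by
    filter_upwards [cylOf_mem_nhds x n] with y hy
    exact h y x hy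
  exact continuousAt_const.congr this.symm

lemma walters_bound {f : MarkovShift A → ℝ} (hW : SatisfiesWalters f) {k n : ℕ} (hk : 1 ≤ k)
    (hn : 1 ≤ n) (x y : MarkovShift A) (h : ∀ i < n + k, x.1 i = y.1 i) :
    |birkhoff f n x - birkhoff f n y| ≤ waltersSup f k :=
  le_csSup (hW.1 k hk) ⟨n, hn, x, y, h, rfl⟩

lemma birkhoff_one (f : MarkovShift A → ℝ) (x : MarkovShift A) : birkhoff f 1 x = f x := by
  simp [birkhoff]

lemma waltersSup_nonneg (f : MarkovShift A → ℝ) (k : ℕ) : 0 ≤ waltersSup f k := by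
  apply Real.sSup_nonneg
  rintro c ⟨n, _, x, y, _, rfl⟩
  exact abs_nonneg _

lemma walters_var {f : MarkovShift A → ℝ} (hW : SatisfiesWalters f) {k : ℕ} (hk : 1 ≤ k)
    (x y : MarkovShift A) (h : ∀ i < k + 1, x.1 i = y.1 i) :
    |f x - f y| ≤ waltersSup f k := by
  have := walters_bound hW hk le_rfl x y (fun i hi => h i (by omega))
  simpa [birkhoff_one] using this

lemma walters_continuous {f : MarkovShift A → ℝ} (hW : SatisfiesWalters f) : Continuous f := by
  refine continuous_of_modulus f (fun k => waltersSup f (k - 1))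
    (hW.2.comp (tendsto_sub_atTop_nat 1)) 2 fun k hk x y h => ?_
  exact walters_var hW (by omega) x y fun i hi => h i (by omega)

lemma var1_bound {f : MarkovShift A → ℝ} (hV : Var1Finite f) :
    ∃ C, 0 ≤ C ∧ ∀ x y : MarkovShift A, x.1 0 = y.1 0 → |f x - f y| ≤ C := by
  obtain ⟨C, hC⟩ := hV
  refine ⟨max C 0, le_max_right _ _, fun x y h => le_max_of_le_left (hC ?_)⟩
  refine ⟨x, y, fun i hi => ?_, by simp [birkhoff_one]⟩
  obtain rfl : i = 0 := by omega
  exact h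

/-- Joining the first `j` symbols of `x` to `z`. -/
def join (x : MarkovShift A) (j : ℕ) (z : MarkovShift A) (h : z.1 0 = x.1 j) : MarkovShift A :=
  ⟨fun i => if i < j then x.1 i else z.1 (i - j), fun i => by
    by_cases h1 : i + 1 < j
    · simp only [show i < j by omega, h1, if_true]; exact x.2 i
    · by_cases h2 : i < j
      · have : i + 1 - j = 0 := by omega
        simp only [h2, h1, if_true, if_false, this, h]
        have : j = i + 1 := by omega
        rw [this]; exact x.2 i
      · simp only [h2, h1, if_false]
        have : i + 1 - j = (i - j) + 1 := by omega
        rw [this]; exact z.2 _⟩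

lemma join_lt (x : MarkovShift A) (j : ℕ) (z : MarkovShift A) (h : z.1 0 = x.1 j) {i : ℕ}
    (hi : i ≤ j) : (join x j z h).1 i = x.1 i := by
  rcases hi.lt_or_eq with hi | rfl
  · simp [join, hi]
  · simp [join, h]

lemma join_shift (x : MarkovShift A) (j : ℕ) (z : MarkovShift A) (h : z.1 0 = x.1 j) :
    shift^[j] (join x j z h) = z := by
  apply ms_ext
  intro i
  rw [shift_iter]
  simp [join]

/-- Prepending a symbol. -/
def cons (a : ℕ) (x : MarkovShift A) (h : A a (x.1 0) = true) : MarkovShift A :=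
  ⟨fun i => Nat.casesOn i a x.1, fun i => by
    cases i with
    | zero => exact h
    | succ i => exact x.2 i⟩

lemma cons_zero (a : ℕ) (x : MarkovShift A) (h : A a (x.1 0) = true) : (cons a x h).1 0 = a := rfl

lemma cons_succ (a : ℕ) (x : MarkovShift A) (h : A a (x.1 0) = true) (i : ℕ) :
    (cons a x h).1 (i + 1) = x.1 i := rfl

lemma shift_cons (a : ℕ) (x : MarkovShift A) (h : A a (x.1 0) = true) :
    shift (cons a x h) = x := rfl

lemma cons_shift (z : MarkovShift A) : cons (z.1 0) (shift z) (z.2 0) = z := by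
  apply ms_ext
  intro i
  cases i <;> rfl

lemma chain_prepend (w : List ℕ) (a : ℕ) (y : MarkovShift A)
    (hw : List.IsChain (fun u v => A u v = true) (a :: (w ++ [y.1 0]))) :
    ∃ z : MarkovShift A, z.1 0 = a ∧ shift^[w.length + 1] z = y ∧
      ∀ i, 1 ≤ i → i ≤ w.length → z.1 i ∈ w := by
  induction w generalizing a with
  | nil =>
    simp at hw
    exact ⟨cons a y hw, rfl, rfl, by simp; omega⟩
  | cons c w ih =>
    rw [List.cons_append, List.isChain_cons_cons] at hw
    obtain ⟨z, hz0, hz1, hz2⟩ := ih c hw.2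
    refine ⟨cons a z (by rw [hz0]; exact hw.1), rfl, ?_, ?_⟩
    · rw [List.length_cons, Function.iterate_succ_apply, shift_cons, hz1]
    · intro i hi1 hi2
      obtain ⟨i, rfl⟩ : ∃ j, i = j + 1 := ⟨i - 1, by omega⟩
      rw [cons_succ]
      rcases Nat.eq_zero_or_pos i with rfl | hi
      · simp [hz0]
      · exact List.mem_cons_of_mem _ (hz2 i hi (by simpa using hi2))

lemma bridge (hb : FinitelyPrimitive A) : ∃ (K : ℕ) (F : Finset ℕ), ∀ a, Admissible A a →
    ∀ y : MarkovShift A, ∃ z : MarkovShift A, z.1 0 = a ∧ shift^[K + 1] z = y ∧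
      ∀ i, 1 ≤ i → i ≤ K → z.1 i ∈ F := by
  obtain ⟨K, F, h⟩ := hb
  refine ⟨K, F, fun a ha y => ?_⟩
  obtain ⟨w, hw, hF, hc⟩ := h a (y.1 0) ha ⟨y, rfl⟩
  obtain ⟨z, h0, h1, h2⟩ := chain_prepend w a y hc
  subst hw
  exact ⟨z, h0, h1, fun i hi hi' => hF _ (h2 i hi hi')⟩

lemma periodic_point (z : MarkovShift A) (n : ℕ) (hn : 1 ≤ n) (hz : z.1 n = z.1 0) :
    ∃ p : MarkovShift A, shift^[n] p = p ∧ ∀ i < n, p.1 i = z.1 i := by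
  refine ⟨⟨fun i => z.1 (i % n), fun i => ?_⟩, ?_, ?_⟩
  · have h1 : i % n < n := Nat.mod_lt _ hn
    rcases Nat.lt_or_ge (i % n + 1) n with h | h
    · have : (i + 1) % n = i % n + 1 := by
        rw [Nat.add_mod]
        rcases Nat.lt_or_ge 1 n with h1 | h1
        · rw [Nat.mod_eq_of_lt h1, Nat.mod_eq_of_lt h]
        · omega
      change A (z.1 (i % n)) (z.1 ((i + 1) % n)) = true
      rw [this]; exact z.2 _
    · have h2 : i % n + 1 = n := by omega
      have : (i + 1) % n = 0 := by
        have := Nat.div_add_mod i n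
        have h3 : i + 1 = n * (i / n + 1) := by rw [mul_add, mul_one]; omega
        rw [h3]; exact Nat.mul_mod_right _ _
      change A (z.1 (i % n)) (z.1 ((i + 1) % n)) = true
      rw [this, ← hz]
      have h4 := z.2 (i % n)
      rwa [h2] at h4
  · apply ms_ext
    intro i
    refine (shift_iter _ n i).trans ?_
    change z.1 ((i + n) % n) = z.1 (i % n)
    rw [Nat.add_mod_right]
  · intro i hi
    change z.1 (i % n) = z.1 i
    rw [Nat.mod_eq_of_lt hi]

lemma finset_bound {f : MarkovShift A → ℝ} (hV : Var1Finite f) (F : Finset ℕ) :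
    ∃ B, 0 ≤ B ∧ ∀ x : MarkovShift A, x.1 0 ∈ F → |f x| ≤ B := by
  obtain ⟨C, hC0, hC⟩ := var1_bound hV
  induction F using Finset.induction_on with
  | empty => exact ⟨0, le_rfl, by simp⟩
  | insert a F _ ih =>
    obtain ⟨B, hB0, hB⟩ := ih
    by_cases ha : Admissible A a
    · obtain ⟨y, hy⟩ := ha
      refine ⟨B + (|f y| + C), by positivity, fun x hx => ?_⟩
      rcases Finset.mem_insert.1 hx with h | h
      · have := hC x y (h.trans hy.symm)
        have := abs_sub_abs_le_abs_sub (f x) (f y)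
        linarith
      · have := hB x h
        have := abs_nonneg (f y)
        linarith
    · refine ⟨B, hB0, fun x hx => ?_⟩
      rcases Finset.mem_insert.1 hx with h | h
      · exact absurd ⟨x, h⟩ ha
      · exact hB x h

/-- There is a summable family dominating `exp (f x)` by the first symbol of `x`. -/
lemma summable_weights (hb : FinitelyPrimitive A) {f : MarkovShift A → ℝ} (hV : Var1Finite f)
    {p : ℝ} (hP : HasGurevichPressure f p) :
    ∃ c : ℕ → ℝ, Summable c ∧ (∀ a, 0 ≤ c a) ∧
      ∀ x : MarkovShift A, Real.exp (f x) ≤ c (x.1 0) := by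
  classical
  by_cases hne : Nonempty (MarkovShift A)
  swap
  · exact ⟨fun _ => 0, summable_zero, fun _ => le_rfl, fun x => absurd ⟨x⟩ hne⟩
  obtain ⟨x0⟩ := hne
  set b := x0.1 0 with hbdef
  obtain ⟨K, F, hbr⟩ := bridge hb
  obtain ⟨C, hC0, hC⟩ := var1_bound hV
  obtain ⟨B, hB0, hB⟩ := finset_bound hV (insert b F)
  set n := 2 * K + 2 with hn
  have key : ∀ a, Admissible A a → ∃ q : MarkovShift A, shift^[n] q = q ∧ q.1 0 = b ∧
      q.1 (K + 1) = a ∧ ∀ x : MarkovShift A, x.1 0 = a → f x - C - n * B ≤ birkhoff f n q := by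
    intro a ha
    obtain ⟨z1, h10, h11, h12⟩ := hbr a ha x0
    obtain ⟨z2, h20, h21, h22⟩ := hbr b ⟨x0, rfl⟩ z1
    have e1 : ∀ i, z2.1 (i + (K + 1)) = z1.1 i := fun i => by rw [← h21, shift_iter]
    have e2 : ∀ i, z1.1 (i + (K + 1)) = x0.1 i := fun i => by rw [← h11, shift_iter]
    have hzn : z2.1 n = z2.1 0 := by
      have : n = (0 + (K + 1)) + (K + 1) := by omega
      rw [this, e1, e2, h20]
    obtain ⟨q, hq1, hq2⟩ := periodic_point z2 n (by omega) hzn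
    have hqa : q.1 (K + 1) = a := by
      rw [hq2 _ (by omega)]
      have := e1 0
      rw [zero_add] at this
      rw [this, h10]
    refine ⟨q, hq1, by rw [hq2 0 (by omega), h20], hqa, fun x hx => ?_⟩
    have hF : ∀ j ∈ Finset.range n, j ≠ K + 1 → q.1 j ∈ insert b F := by
      intro j hj hjK
      have hj := Finset.mem_range.1 hj
      rw [hq2 j hj]
      rcases Nat.eq_zero_or_pos j with rfl | hj0
      · rw [h20]; exact Finset.mem_insert_self _ _
      · apply Finset.mem_insert_of_mem
        rcases Nat.lt_or_ge j (K + 1) with h | h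
        · exact h22 j hj0 (by omega)
        · obtain ⟨i, rfl⟩ : ∃ i, j = i + (K + 1) := ⟨j - (K + 1), by omega⟩
          rw [e1]
          exact h12 i (by omega) (by omega)
    have hsum : ∑ j ∈ Finset.range n, ((if j = K + 1 then f x - C else 0) - B) ≤
        birkhoff f n q := by
      apply Finset.sum_le_sum
      intro j hj
      have e0 : (shift^[j] q).1 0 = q.1 j := by rw [shift_iter, zero_add]
      split_ifs with hjK
      · have := hC x (shift^[j] q) (by rw [e0, hjK, hqa, hx])
        have := (abs_le.1 this).2
        linarith
      · have := hB (shift^[j] q) (by rw [e0]; exact hF j hj hjK)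
        have := (abs_le.1 this).1
        linarith
    refine le_trans (le_of_eq ?_) hsum
    rw [Finset.sum_sub_distrib, Finset.sum_ite_eq' (Finset.range n) (K + 1)]
    simp [show K + 1 < n by omega]
  choose q hq1 hq2 hq3 hq4 using key
  let Q : {a // Admissible A a} → {x : MarkovShift A // shift^[n] x = x ∧ x.1 0 = b} :=
    fun a => ⟨q a.1 a.2, hq1 _ _, hq2 _ _⟩
  have hQ : Function.Injective Q := by
    intro a a' h
    apply Subtype.ext
    rw [← hq3 a.1 a.2, ← hq3 a'.1 a'.2]
    have : q a.1 a.2 = q a'.1 a'.2 := congrArg Subtype.val h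
    rw [this]
  have hs := ((hP b ⟨x0, rfl⟩).1 n (by omega)).comp_injective hQ
  let c : ℕ → ℝ := fun a => if h : Admissible A a then
    Real.exp (C + n * B) * Real.exp (birkhoff f n (q a h)) else 0
  refine ⟨c, ?_, ?_, ?_⟩
  · have : Function.support c ⊆ {a | Admissible A a} := by
      intro a ha
      by_contra h
      exact ha (dif_neg h)
    refine (summable_subtype_iff_indicator (f := c) (s := {a | Admissible A a})).1 ?_ |>.congr ?_
    · refine (hs.mul_left (Real.exp (C + n * B))).congr fun a => ?_
      change _ = c a.1
      simp only [c]
      rw [dif_pos a.2]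
      rfl
    · intro a
      rw [Set.indicator_eq_self.2 this]
  · intro a
    simp only [c]
    split_ifs <;> positivity
  · intro x
    have hx : Admissible A (x.1 0) := ⟨x, rfl⟩
    simp only [c]
    rw [dif_pos hx, ← Real.exp_add]
    apply Real.exp_le_exp.2
    have := hq4 _ hx x rfl
    linarith

end MarkovShift

namespace MarkovShift
variable {A : ℕ → ℕ → Bool}

open Classical in
/-- One term of the transfer operator, indexed by the prepended symbol. -/
noncomputable def term (g u : MarkovShift A → ℝ) (x : MarkovShift A) (a : ℕ) : ℝ :=
  if h : A a (x.1 0) = true then Real.exp (g (cons a x h)) * u (cons a x h) else 0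

lemma term_pos' {g u : MarkovShift A → ℝ} {x : MarkovShift A} {a : ℕ} (h : A a (x.1 0) = true) :
    term g u x a = Real.exp (g (cons a x h)) * u (cons a x h) := dif_pos h

lemma term_neg' {g u : MarkovShift A → ℝ} {x : MarkovShift A} {a : ℕ} (h : ¬ A a (x.1 0) = true) :
    term g u x a = 0 := dif_neg h

lemma term_of_point (g u : MarkovShift A → ℝ) (z : MarkovShift A) :
    term g u (shift z) (z.1 0) = Real.exp (g z) * u z := by
  rw [term_pos' (z.2 0), cons_shift]

lemma fiber_inj (x : MarkovShift A) :
    Function.Injective (fun y : {y : MarkovShift A // shift y = x} => y.1.1 0) := by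
  rintro ⟨y, hy⟩ ⟨y', hy'⟩ h
  apply Subtype.ext
  apply ms_ext
  intro i
  cases i with
  | zero => exact h
  | succ i => 
    have : (shift y).1 i = (shift y').1 i := by rw [hy, hy']
    exact this

lemma fiber_support (g u : MarkovShift A → ℝ) (x : MarkovShift A) :
    Function.support (term g u x) ⊆
      Set.range (fun y : {y : MarkovShift A // shift y = x} => y.1.1 0) := by
  intro a ha
  by_cases h : A a (x.1 0) = true
  · exact ⟨⟨cons a x h, rfl⟩, rfl⟩
  · exact absurd (term_neg' h) ha

lemma fiber_comp (g u : MarkovShift A → ℝ) (x : MarkovShift A) :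
    (fun y : {y : MarkovShift A // shift y = x} => Real.exp (g y.1) * u y.1) =
      fun y => term g u x (y.1.1 0) := by
  funext ⟨y, hy⟩
  subst hy
  exact (term_of_point g u y).symm

lemma ruelle_eq (g u : MarkovShift A → ℝ) (x : MarkovShift A) :
    ruelle g u x = ∑' a, term g u x a := by
  rw [ruelle, fiber_comp]
  exact (fiber_inj x).tsum_eq (fiber_support g u x)

/-- nonnegative bounded continuous functions -/
def Cls (u : MarkovShift A → ℝ) : Prop :=
  Continuous u ∧ (∀ x, 0 ≤ u x) ∧ ∃ B, 0 ≤ B ∧ ∀ x, u x ≤ B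

/-- Potential dominated by a summable sequence. -/
def Dom (g : MarkovShift A → ℝ) (c : ℕ → ℝ) : Prop :=
  Continuous g ∧ Summable c ∧ (∀ a, 0 ≤ c a) ∧ ∀ x : MarkovShift A, Real.exp (g x) ≤ c (x.1 0)

lemma term_nonneg {g u : MarkovShift A → ℝ} (hu : ∀ x, 0 ≤ u x) (x : MarkovShift A) (a : ℕ) :
    0 ≤ term g u x a := by
  by_cases h : A a (x.1 0) = true
  · rw [term_pos' h]; exact mul_nonneg (Real.exp_pos _).le (hu _)
  · rw [term_neg' h]

lemma term_le {g u : MarkovShift A → ℝ} {c : ℕ → ℝ} (hg : Dom g c) (hu : ∀ x, 0 ≤ u x) {B : ℝ}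
    (hB0 : 0 ≤ B) (hB : ∀ x, u x ≤ B) (x : MarkovShift A) (a : ℕ) : term g u x a ≤ c a * B := by
  by_cases h : A a (x.1 0) = true
  · rw [term_pos' h]
    exact mul_le_mul (hg.2.2.2 (cons a x h)) (hB _) (hu _) (hg.2.2.1 a)
  · rw [term_neg' h]; exact mul_nonneg (hg.2.2.1 a) hB0

lemma term_summable {g u : MarkovShift A → ℝ} {c : ℕ → ℝ} (hg : Dom g c) (hu : Cls u)
    (x : MarkovShift A) : Summable (term g u x) := by
  obtain ⟨_, hu0, B, hB0, hB⟩ := hu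
  exact Summable.of_nonneg_of_le (term_nonneg hu0 x) (term_le hg hu0 hB0 hB x)
    (hg.2.1.mul_right B)

lemma term_continuous {g u : MarkovShift A → ℝ} (hg : Continuous g) (hu : Continuous u) (a : ℕ) :
    Continuous (fun x => term g u x a) := by
  rw [continuous_iff_continuousAt]
  intro x
  by_cases h : A a (x.1 0) = true
  · have hG : Continuous (fun y => Real.exp (g y) * u y) := (Real.continuous_exp.comp hg).mul hu
    rw [ContinuousAt, Metric.tendsto_nhds]
    intro ε hε
    have := (Metric.tendsto_nhds.1 (hG.tendsto (cons a x h))) ε hε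
    obtain ⟨n, hn⟩ := exists_cylOf_subset this
    filter_upwards [cylOf_mem_nhds x (n + 1)] with y hy
    have h0 : y.1 0 = x.1 0 := hy 0 (by omega)
    have h' : A a (y.1 0) = true := by rw [h0]; exact h
    rw [term_pos' h, term_pos' h']
    apply hn
    intro i hi
    cases i with
    | zero => rfl
    | succ i => exact hy i (by omega)
  · have : (fun y => term g u y a) =ᶠ[𝓝 x] fun _ => term g u x a := by
      filter_upwards [cylOf_mem_nhds x 1] with y hy
      have h0 : y.1 0 = x.1 0 := hy 0 (by omega)
      rw [term_neg' h, term_neg' (by rw [h0]; exact h)]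
    exact continuousAt_const.congr this.symm

lemma ruelle_cls {g u : MarkovShift A → ℝ} {c : ℕ → ℝ} (hg : Dom g c) (hu : Cls u) :
    Cls (ruelle g u) := by
  have e : ruelle g u = fun x => ∑' a, term g u x a := funext (ruelle_eq g u)
  rw [e]
  have hs := term_summable hg hu
  obtain ⟨huc, hu0, B, hB0, hB⟩ := hu
  refine ⟨?_, fun x => tsum_nonneg (term_nonneg hu0 x), ∑' a, c a * B, ?_, fun x => ?_⟩
  · refine continuous_tsum (fun a => term_continuous hg.1 huc a) (hg.2.1.mul_right B) ?_
    intro a x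
    rw [Real.norm_of_nonneg (term_nonneg hu0 x a)]
    exact term_le hg hu0 hB0 hB x a
  · exact tsum_nonneg fun a => mul_nonneg (hg.2.2.1 a) hB0
  · exact (hs x).tsum_le_tsum (term_le hg hu0 hB0 hB x) (hg.2.1.mul_right B)

lemma iter_cls {g u : MarkovShift A → ℝ} {c : ℕ → ℝ} (hg : Dom g c) (hu : Cls u) (n : ℕ) :
    Cls ((ruelle g)^[n] u) := by
  induction n with
  | zero => exact hu
  | succ n ih => rw [Function.iterate_succ_apply']; exact ruelle_cls hg ih

lemma birkhoff_succ (g : MarkovShift A → ℝ) (n : ℕ) (z : MarkovShift A) :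
    birkhoff g (n + 1) z = g z + birkhoff g n (shift z) := by
  rw [birkhoff, Finset.sum_range_succ', add_comm]
  rfl

lemma le_ruelle {g u : MarkovShift A → ℝ} {c : ℕ → ℝ} (hg : Dom g c) (hu : Cls u)
    (z : MarkovShift A) : Real.exp (g z) * u z ≤ ruelle g u (shift z) := by
  rw [ruelle_eq, ← term_of_point]
  exact (term_summable hg hu _).le_tsum _ fun a _ => term_nonneg hu.2.1 _ a

lemma le_iter {g u : MarkovShift A → ℝ} {c : ℕ → ℝ} (hg : Dom g c) (hu : Cls u) (n : ℕ)
    (z : MarkovShift A) : Real.exp (birkhoff g n z) * u z ≤ (ruelle g)^[n] u (shift^[n] z) := by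
  induction n generalizing z u with
  | zero => simp [birkhoff]
  | succ n ih =>
    rw [Function.iterate_succ_apply, Function.iterate_succ_apply]
    refine le_trans ?_ (ih (ruelle_cls hg hu) (shift z))
    rw [birkhoff_succ, add_comm, Real.exp_add, mul_assoc]
    exact mul_le_mul_of_nonneg_left (le_ruelle hg hu z) (Real.exp_pos _).le

lemma iter_compare {g u : MarkovShift A → ℝ} {c : ℕ → ℝ} (hg : Dom g c) (hu : Cls u) (n : ℕ)
    (D : ℝ) (k : ℕ) (hk : 1 ≤ k) (x y : MarkovShift A) (hxy : ∀ i < k, x.1 i = y.1 i)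
    (H : ∀ z z' : MarkovShift A, (∀ i < n + k, z.1 i = z'.1 i) →
      Real.exp (birkhoff g n z) * u z ≤ Real.exp D * (Real.exp (birkhoff g n z') * u z')) :
    (ruelle g)^[n] u x ≤ Real.exp D * (ruelle g)^[n] u y := by
  induction n generalizing u with
  | zero =>
    have := H x y (by simpa using hxy)
    simpa [birkhoff] using this
  | succ n ih =>
    rw [Function.iterate_succ_apply]
    refine ih (ruelle_cls hg hu) fun w w' hw => ?_
    rw [ruelle_eq, ruelle_eq, ← tsum_mul_left, ← tsum_mul_left, ← tsum_mul_left]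
    have h0 : w.1 0 = w'.1 0 := hw 0 (by omega)
    refine Summable.tsum_le_tsum (fun a => ?_) ((term_summable hg hu w).mul_left _)
      (((term_summable hg hu w').mul_left _).mul_left _)
    by_cases h : A a (w.1 0) = true
    · have h' : A a (w'.1 0) = true := by rw [← h0]; exact h
      rw [term_pos' h, term_pos' h']
      have := H (cons a w h) (cons a w' h') (by
        intro i hi
        cases i with
        | zero => rfl
        | succ i => exact hw i (by omega))
      rw [birkhoff_succ, birkhoff_succ, shift_cons, shift_cons, Real.exp_add, Real.exp_add] at this
      calc _ = Real.exp (g (cons a w h)) * Real.exp (birkhoff g n w) * u (cons a w h) := by ring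
        _ ≤ _ := this
        _ = _ := by ring
    · rw [term_neg' h, term_neg' (by rw [← h0]; exact h)]; simp

lemma rpf_summable {g h : MarkovShift A → ℝ} {p : ℝ} {ν : Measure (MarkovShift A)}
    (H : IsRPF g p h ν) (x : MarkovShift A) : Summable (term g h x) := by
  by_contra hs
  have h1 := H.2.2.1 x
  rw [ruelle_eq, tsum_eq_zero_of_not_summable hs] at h1
  have := mul_pos (Real.exp_pos p) (H.2.1 x)
  linarith

lemma rpf_tsum {g h : MarkovShift A → ℝ} {p : ℝ} {ν : Measure (MarkovShift A)}
    (H : IsRPF g p h ν) (x : MarkovShift A) : ∑' a, term g h x a = Real.exp p * h x := by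
  rw [← ruelle_eq, H.2.2.1 x]

lemma rpf_le {g h : MarkovShift A → ℝ} {p : ℝ} {ν : Measure (MarkovShift A)}
    (H : IsRPF g p h ν) (z : MarkovShift A) :
    Real.exp (g z) * h z ≤ Real.exp p * h (shift z) := by
  rw [← rpf_tsum H, ← term_of_point]
  exact (rpf_summable H _).le_tsum _ fun a _ => term_nonneg (fun x => (H.2.1 x).le) _ a

lemma rpf_iter_le {g h : MarkovShift A → ℝ} {c : ℕ → ℝ} (hg : Dom g c) {p : ℝ}
    {ν : Measure (MarkovShift A)} (H : IsRPF g p h ν) {u : MarkovShift A → ℝ} (hu : Cls u)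
    (huh : ∀ x, u x ≤ h x) (n : ℕ) (x : MarkovShift A) :
    (ruelle g)^[n] u x ≤ Real.exp (n * p) * h x := by
  induction n generalizing x with
  | zero => simpa using huh x
  | succ n ih =>
    rw [Function.iterate_succ_apply', ruelle_eq]
    have e : Real.exp ((n + 1 : ℕ) * p) * h x = ∑' a, Real.exp (n * p) * term g h x a := by
      rw [tsum_mul_left, rpf_tsum H]
      push_cast
      rw [add_mul, one_mul, Real.exp_add]; ring
    rw [e]
    refine Summable.tsum_le_tsum (fun a => ?_) (term_summable hg (iter_cls hg hu n) x)
      ((rpf_summable H x).mul_left _)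
    by_cases h' : A a (x.1 0) = true
    · rw [term_pos' h', term_pos' h']
      calc _ ≤ Real.exp (g (cons a x h')) * (Real.exp (n * p) * h (cons a x h')) :=
            mul_le_mul_of_nonneg_left (ih _) (Real.exp_pos _).le
        _ = _ := by ring
    · rw [term_neg' h', term_neg' h']; simp

lemma Cls.integrable {u : MarkovShift A → ℝ} (hu : Cls u) (ν : Measure (MarkovShift A))
    [IsProbabilityMeasure ν] : Integrable u ν := by
  obtain ⟨huc, hu0, B, hB0, hB⟩ := hu
  refine (integrable_const B).mono' huc.measurable.aestronglyMeasurable ?_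
  exact Eventually.of_forall fun x => by rw [Real.norm_of_nonneg (hu0 x)]; exact hB x

lemma Cls.bounded {u : MarkovShift A → ℝ} (hu : Cls u) : BoundedFun u := by
  obtain ⟨huc, hu0, B, hB0, hB⟩ := hu
  exact ⟨B, fun x => by rw [abs_of_nonneg (hu0 x)]; exact hB x⟩

lemma rpf_iter_integral {g h : MarkovShift A → ℝ} {c : ℕ → ℝ} (hg : Dom g c) {p : ℝ}
    {ν : Measure (MarkovShift A)} (H : IsRPF g p h ν) {u : MarkovShift A → ℝ} (hu : Cls u)
    (n : ℕ) : ∫ x, (ruelle g)^[n] u x ∂ν = Real.exp (n * p) * ∫ x, u x ∂ν := by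
  induction n with
  | zero => simp
  | succ n ih =>
    rw [Function.iterate_succ_apply']
    have hc := iter_cls hg hu n
    rw [H.2.2.2.2.1 _ hc.1 hc.bounded, ih]
    push_cast
    rw [add_mul, one_mul, Real.exp_add]; ring

lemma rpf_h_integrable {g h : MarkovShift A → ℝ} {p : ℝ}
    {ν : Measure (MarkovShift A)} (H : IsRPF g p h ν) : Integrable h ν := by
  by_contra hi
  have := H.2.2.2.2.2
  rw [integral_undef hi] at this
  exact zero_ne_one this

lemma cyl_cls (x : MarkovShift A) (n : ℕ) :
    Cls (Set.indicator (cylOf x n) (fun _ => (1 : ℝ))) := by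
  classical
  refine ⟨?_, fun y => Set.indicator_nonneg (fun _ _ => zero_le_one) y, 1, zero_le_one, fun y => ?_⟩
  · apply continuous_of_locally_const _ n
    intro y z hyz
    have : y ∈ cylOf x n ↔ z ∈ cylOf x n := by
      constructor
      · intro h i hi; rw [← hyz i hi]; exact h i hi
      · intro h i hi; rw [hyz i hi]; exact h i hi
    by_cases hy : y ∈ cylOf x n
    · rw [Set.indicator_of_mem hy, Set.indicator_of_mem (this.1 hy)]
    · rw [Set.indicator_of_notMem hy, Set.indicator_of_notMem (fun h => hy (this.2 h))]
  · exact Set.indicator_le_self' (fun _ _ => zero_le_one) y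

/-- The eigenmeasure charges every cylinder. -/
lemma rpf_cyl_pos (hb : FinitelyPrimitive A) {g h : MarkovShift A → ℝ} {c : ℕ → ℝ} (hg : Dom g c)
    {p : ℝ} {ν : Measure (MarkovShift A)} (H : IsRPF g p h ν) (x : MarkovShift A) (n : ℕ) :
    0 < ∫ y, Set.indicator (cylOf x n) (fun _ => (1 : ℝ)) y ∂ν := by
  obtain ⟨K, F, hbr⟩ := bridge hb
  have hu := cyl_cls x n
  set u := Set.indicator (cylOf x n) (fun _ => (1 : ℝ)) with hudef
  have hν := H.2.2.2.1
  have hpos : ∀ y, 0 < (ruelle g)^[K + 1 + n] u y := by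
    intro y
    obtain ⟨z, hz0, hz1, _⟩ := hbr (x.1 n) ⟨shift^[n] x, by rw [shift_iter, zero_add]⟩ y
    have h1 := join_shift x n z hz0
    have := le_iter hg hu (K + 1 + n) (join x n z hz0)
    rw [Function.iterate_add_apply shift, h1, hz1] at this
    refine lt_of_lt_of_le ?_ this
    have hm : join x n z hz0 ∈ cylOf x n := fun i hi => join_lt x n z hz0 hi.le
    rw [hudef, Set.indicator_of_mem hm, mul_one]
    exact Real.exp_pos _
  have hposi : 0 < ∫ y, (ruelle g)^[K + 1 + n] u y ∂ν := by
    rw [integral_pos_iff_support_of_nonneg (fun y => (hpos y).le)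
      ((iter_cls hg hu _).integrable ν)]
    have : Function.support ((ruelle g)^[K + 1 + n] u) = Set.univ :=
      Set.eq_univ_of_forall fun y => (hpos y).ne'
    rw [this]; simp
  rw [rpf_iter_integral hg H hu] at hposi
  exact pos_of_mul_pos_right hposi (Real.exp_pos _).le

end MarkovShift

namespace MarkovShift
variable {A : ℕ → ℕ → Bool}

/-- locally constant minorants of `h` -/
noncomputable def minorant (h : MarkovShift A → ℝ) (N : ℕ) (x : MarkovShift A) : ℝ :=
  min (N : ℝ) (sInf (h '' cylOf x N))

lemma minorant_nonneg {h : MarkovShift A → ℝ} (hh : ∀ x, 0 < h x) (N : ℕ) (x : MarkovShift A) :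
    0 ≤ minorant h N x := by
  refine le_min (Nat.cast_nonneg N) (Real.sInf_nonneg ?_)
  rintro _ ⟨y, _, rfl⟩
  exact (hh y).le

lemma minorant_le {h : MarkovShift A → ℝ} (hh : ∀ x, 0 < h x) (N : ℕ) (x : MarkovShift A) :
    minorant h N x ≤ h x := by
  refine (min_le_right _ _).trans (csInf_le ⟨0, ?_⟩ ⟨x, self_mem_cylOf x N, rfl⟩)
  rintro _ ⟨y, _, rfl⟩
  exact (hh y).le

lemma minorant_congr (h : MarkovShift A → ℝ) (N : ℕ) (x y : MarkovShift A)
    (hxy : ∀ i < N, x.1 i = y.1 i) : minorant h N x = minorant h N y := by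
  have : cylOf x N = cylOf y N := by
    ext z
    constructor
    · intro hz i hi; rw [hz i hi, hxy i hi]
    · intro hz i hi; rw [hz i hi, hxy i hi]
  rw [minorant, minorant, this]

lemma minorant_cls {h : MarkovShift A → ℝ} (hh : ∀ x, 0 < h x) (N : ℕ) : Cls (minorant h N) :=
  ⟨continuous_of_locally_const _ N (minorant_congr h N), minorant_nonneg hh N, N,
    Nat.cast_nonneg N, fun _ => min_le_left _ _⟩

lemma minorant_tendsto {h : MarkovShift A → ℝ} (hc : Continuous h) (hh : ∀ x, 0 < h x)
    (x : MarkovShift A) : Tendsto (fun N => minorant h N x) atTop (𝓝 (h x)) := by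
  rw [Metric.tendsto_nhds]
  intro ε hε
  obtain ⟨n, hn⟩ := exists_cylOf_subset (Metric.tendsto_nhds.1 (hc.tendsto x) (ε / 2) (half_pos hε))
  obtain ⟨N0, hN0⟩ := exists_nat_ge (h x)
  filter_upwards [eventually_ge_atTop (max n N0)] with N hN
  have h1 := minorant_le hh N x
  have h2 : h x - ε / 2 ≤ minorant h N x := by
    refine le_min ?_ ?_
    · have : (N0 : ℝ) ≤ N := by exact_mod_cast (le_max_right _ _).trans hN
      linarith
    · refine le_csInf ⟨h x, x, self_mem_cylOf x N, rfl⟩ ?_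
      rintro _ ⟨y, hy, rfl⟩
      have := hn (show y ∈ cylOf x n from fun i hi =>
        hy i (hi.trans_le ((le_max_left _ _).trans hN)))
      have : |h y - h x| < ε / 2 := this
      have := (abs_lt.1 this).1
      linarith
  rw [Real.dist_eq, abs_lt]
  constructor <;> linarith

lemma rpf_regular (hb : FinitelyPrimitive A) {g h : MarkovShift A → ℝ} {c : ℕ → ℝ} (hg : Dom g c)
    {p : ℝ} {ν : Measure (MarkovShift A)} (H : IsRPF g p h ν) (D : ℝ) (k : ℕ) (hk : 1 ≤ k)
    (hD : ∀ n, 1 ≤ n → ∀ z z' : MarkovShift A, (∀ i < n + k, z.1 i = z'.1 i) →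
      birkhoff g n z ≤ D + birkhoff g n z')
    (x y : MarkovShift A) (hxy : ∀ i < k, x.1 i = y.1 i) : h x ≤ Real.exp D * h y := by
  by_contra hcon
  push Not at hcon
  have hν := H.2.2.2.1
  have hh := H.2.1
  set q := Real.exp D * h y with hq
  set ε := (h x - q) / 2 with hε
  have hεpos : 0 < ε := by rw [hε]; linarith
  have hU : {z | q + ε < h z} ∈ 𝓝 x :=
    (isOpen_lt continuous_const H.1).mem_nhds (by simp only [Set.mem_ofPred_eq]; linarith)
  obtain ⟨n, hn⟩ := exists_cylOf_subset hU
  set u := Set.indicator (cylOf x (max n k)) (fun _ => (1 : ℝ)) with hu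
  have hucls : Cls u := cyl_cls x _
  have hupos : 0 < ∫ z, u z ∂ν := rpf_cyl_pos hb hg H x _
  have hhi := rpf_h_integrable H
  have key : ∀ N : ℕ, 1 ≤ N → ∫ z, minorant h N z ∂ν + ε * ∫ z, u z ∂ν ≤ 1 := by
    intro N hN
    have hm := minorant_cls hh N
    have hI := rpf_iter_integral hg H hm N
    have hiter := iter_cls hg hm N
    have e1 : ∫ z, minorant h N z ∂ν =
        ∫ z, Real.exp (-(N * p)) * (ruelle g)^[N] (minorant h N) z ∂ν := by
      rw [integral_const_mul, hI, ← mul_assoc, ← Real.exp_add]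
      simp
    rw [e1, ← integral_const_mul, ← integral_add ((hiter.integrable ν).const_mul _)
      ((hucls.integrable ν).const_mul _), ← H.2.2.2.2.2]
    refine integral_mono (((hiter.integrable ν).const_mul _).add
      ((hucls.integrable ν).const_mul _)) hhi fun z => ?_
    have hle : ∀ w, Real.exp (-(N * p)) * (ruelle g)^[N] (minorant h N) w ≤ h w := by
      intro w
      have := rpf_iter_le hg H hm (minorant_le hh N) N w
      calc _ ≤ Real.exp (-(N * p)) * (Real.exp (N * p) * h w) :=
            mul_le_mul_of_nonneg_left this (Real.exp_pos _).le
        _ = h w := by rw [← mul_assoc, ← Real.exp_add]; simp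
    change Real.exp (-(N * p)) * (ruelle g)^[N] (minorant h N) z + ε * u z ≤ h z
    by_cases hz : z ∈ cylOf x (max n k)
    · have hzy : ∀ i < k, z.1 i = y.1 i := fun i hi =>
        (hz i (hi.trans_le (le_max_right _ _))).trans (hxy i hi)
      have hcmp := iter_compare hg hm N D k hk z y hzy (by
        intro w w' hw
        rw [minorant_congr h N w w' (fun i hi => hw i (by omega)), ← mul_assoc, ← Real.exp_add]
        exact mul_le_mul_of_nonneg_right (Real.exp_le_exp.2 (hD N hN w w' hw))
          (minorant_nonneg hh N w'))
      have h1 : Real.exp (-(N * p)) * (ruelle g)^[N] (minorant h N) z ≤ q := by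
        calc _ ≤ Real.exp (-(N * p)) * (Real.exp D * (ruelle g)^[N] (minorant h N) y) :=
              mul_le_mul_of_nonneg_left hcmp (Real.exp_pos _).le
          _ = Real.exp D * (Real.exp (-(N * p)) * (ruelle g)^[N] (minorant h N) y) := by ring
          _ ≤ q := mul_le_mul_of_nonneg_left (hle y) (Real.exp_pos _).le
      have h2 : q + ε < h z := hn (fun i hi => hz i (hi.trans_le (le_max_left _ _)))
      have h3 : u z = 1 := Set.indicator_of_mem hz _
      rw [h3]; linarith
    · have h3 : u z = 0 := Set.indicator_of_notMem hz _
      rw [h3]; linarith [hle z]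
  have hlim : Tendsto (fun N => ∫ z, minorant h N z ∂ν) atTop (𝓝 (∫ z, h z ∂ν)) := by
    refine tendsto_integral_of_dominated_convergence h
      (fun N => (minorant_cls hh N).1.measurable.aestronglyMeasurable) hhi ?_ ?_
    · intro N
      exact Eventually.of_forall fun z => by
        rw [Real.norm_of_nonneg (minorant_nonneg hh N z)]; exact minorant_le hh N z
    · exact Eventually.of_forall fun z => minorant_tendsto H.1 hh z
  rw [H.2.2.2.2.2] at hlim
  have h1 := le_of_tendsto (hlim.add_const (ε * ∫ z, u z ∂ν))
    ((eventually_ge_atTop 1).mono key)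
  have := mul_pos hεpos hupos
  linarith

/-- `exp p ≤ Σ c`. -/
lemma rpf_exp_le {g h : MarkovShift A → ℝ} {c : ℕ → ℝ} (hg : Dom g c)
    {p : ℝ} {ν : Measure (MarkovShift A)} (H : IsRPF g p h ν) : Real.exp p ≤ ∑' a, c a := by
  have hν := H.2.2.2.1
  have h1 : Cls (fun _ : MarkovShift A => (1 : ℝ)) :=
    ⟨continuous_const, fun _ => zero_le_one, 1, zero_le_one, fun _ => le_rfl⟩
  have h2 := rpf_iter_integral hg H h1 1
  simp only [Function.iterate_one, Nat.cast_one, one_mul, integral_const, probReal_univ,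
    smul_eq_mul, mul_one] at h2
  rw [← h2]
  have : ∫ _x, (∑' a, c a) ∂ν = ∑' a, c a := by simp
  rw [← this]
  refine integral_mono ((ruelle_cls hg h1).integrable ν) (integrable_const _) fun x => ?_
  change ruelle g _ x ≤ _
  rw [ruelle_eq]
  refine (term_summable hg h1 x).tsum_le_tsum (fun a => ?_) hg.2.1
  have := term_le hg h1.2.1 zero_le_one (fun _ => le_rfl) x a
  simpa using this

/-- iterated lower bound for the eigenfunction -/
lemma rpf_le_iter {g h : MarkovShift A → ℝ} {p : ℝ} {ν : Measure (MarkovShift A)}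
    (H : IsRPF g p h ν) (n : ℕ) (z : MarkovShift A) :
    Real.exp (birkhoff g n z) * h z ≤ Real.exp (n * p) * h (shift^[n] z) := by
  induction n generalizing z with
  | zero => simp [birkhoff]
  | succ n ih =>
    rw [birkhoff_succ, add_comm, Real.exp_add, mul_assoc, Function.iterate_succ_apply]
    calc _ ≤ Real.exp (birkhoff g n (shift z)) * (Real.exp p * h (shift z)) :=
          mul_le_mul_of_nonneg_left (rpf_le H z) (Real.exp_pos _).le
      _ = Real.exp p * (Real.exp (birkhoff g n (shift z)) * h (shift z)) := by ring
      _ ≤ Real.exp p * (Real.exp (n * p) * h (shift^[n] (shift z))) :=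
          mul_le_mul_of_nonneg_left (ih _) (Real.exp_pos _).le
      _ = _ := by
          push_cast
          rw [add_mul, one_mul, Real.exp_add]; ring

end MarkovShift

namespace MarkovShift
variable {A : ℕ → ℕ → Bool}

lemma rpf_fiber_sum {g h : MarkovShift A → ℝ} {p : ℝ} {ν : Measure (MarkovShift A)}
    (H : IsRPF g p h ν) (w : MarkovShift A) (S : Finset (MarkovShift A))
    (hS : ∀ z ∈ S, shift z = w) :
    ∑ z ∈ S, Real.exp (g z) * h z ≤ Real.exp p * h w := by
  classical
  have hinj : Set.InjOn (fun z : MarkovShift A => z.1 0) S := by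
    intro z hz z' hz' hzz
    have := @fiber_inj A w ⟨z, hS z hz⟩ ⟨z', hS z' hz'⟩ hzz
    exact congrArg Subtype.val this
  have : ∑ z ∈ S, Real.exp (g z) * h z = ∑ a ∈ S.image (fun z => z.1 0), term g h w a := by
    rw [Finset.sum_image hinj]
    refine Finset.sum_congr rfl fun z hz => ?_
    rw [← term_of_point, hS z hz]
  rw [this, ← rpf_tsum H]
  exact (rpf_summable H w).sum_le_tsum _ fun a _ => term_nonneg (fun x => (H.2.1 x).le) _ a

lemma rpf_word_sum {g h : MarkovShift A → ℝ} {p : ℝ} {ν : Measure (MarkovShift A)}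
    (H : IsRPF g p h ν) (n : ℕ) (y : MarkovShift A) (S : Finset (MarkovShift A))
    (hS : ∀ z ∈ S, shift^[n] z = y) :
    ∑ z ∈ S, Real.exp (birkhoff g n z) * h z ≤ Real.exp (n * p) * h y := by
  classical
  induction n generalizing S with
  | zero =>
    have hsub : S ⊆ {y} := fun z hz => Finset.mem_singleton.2 (hS z hz)
    calc _ ≤ ∑ z ∈ {y}, Real.exp (birkhoff g 0 z) * h z :=
          Finset.sum_le_sum_of_subset_of_nonneg hsub fun z _ _ =>
            mul_nonneg (Real.exp_pos _).le (H.2.1 z).le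
      _ = _ := by simp [birkhoff]
  | succ n ih =>
    rw [← Finset.sum_fiberwise_of_maps_to
      (fun z hz => Finset.mem_image_of_mem shift hz : ∀ z ∈ S, shift z ∈ S.image shift)]
    have h1 : ∀ w ∈ S.image shift, ∑ z ∈ S with shift z = w,
        Real.exp (birkhoff g (n + 1) z) * h z ≤
          Real.exp p * (Real.exp (birkhoff g n w) * h w) := by
      intro w _
      have e : ∑ z ∈ S with shift z = w, Real.exp (birkhoff g (n + 1) z) * h z =
          Real.exp (birkhoff g n w) * ∑ z ∈ S with shift z = w, Real.exp (g z) * h z := by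
        rw [Finset.mul_sum]
        refine Finset.sum_congr rfl fun z hz => ?_
        rw [birkhoff_succ, (Finset.mem_filter.1 hz).2, Real.exp_add]
        ring
      rw [e]
      calc _ ≤ Real.exp (birkhoff g n w) * (Real.exp p * h w) :=
            mul_le_mul_of_nonneg_left
              (rpf_fiber_sum H w _ fun z hz => (Finset.mem_filter.1 hz).2) (Real.exp_pos _).le
        _ = _ := by ring
    refine (Finset.sum_le_sum h1).trans ?_
    rw [← Finset.mul_sum]
    have := ih (S.image shift) (by
      intro w hw
      obtain ⟨z, hz, rfl⟩ := Finset.mem_image.1 hw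
      rw [← Function.iterate_succ_apply]
      exact hS z hz)
    calc _ ≤ Real.exp p * (Real.exp (n * p) * h y) :=
          mul_le_mul_of_nonneg_left this (Real.exp_pos _).le
      _ = _ := by
          push_cast
          rw [add_mul, one_mul, Real.exp_add]; ring

lemma rpf_osc {g h : MarkovShift A → ℝ} {p : ℝ} {ν : Measure (MarkovShift A)}
    (H : IsRPF g p h ν) {K : ℕ} {F : Finset ℕ} (hbr : ∀ a, Admissible A a →
    ∀ y : MarkovShift A, ∃ z : MarkovShift A, z.1 0 = a ∧ shift^[K + 1] z = y ∧
      ∀ i, 1 ≤ i → i ≤ K → z.1 i ∈ F) (D0 D1 B : ℝ)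
    (hD0 : ∀ x y : MarkovShift A, x.1 0 = y.1 0 → g x ≤ g y + D0)
    (hD1 : ∀ x y : MarkovShift A, x.1 0 = y.1 0 → h x ≤ Real.exp D1 * h y)
    (hB : ∀ x : MarkovShift A, x.1 0 ∈ F → -B ≤ g x) (x y : MarkovShift A) :
    h x ≤ Real.exp (D0 + D1 + K * B + K * p) * h y := by
  classical
  choose z hz0 hz1 hz2 using hbr
  let Z : ℕ → MarkovShift A := fun a => if ha : Admissible A a then z a ha y else y
  have hadm : ∀ a, A a (x.1 0) = true → Admissible A a := fun a ha => ⟨cons a x ha, rfl⟩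
  have hZ : ∀ a (ha : Admissible A a), Z a = z a ha y := fun a ha => dif_pos ha
  have hle : ∑' a, term g h x a ≤
      Real.exp (D0 + D1 + K * B) * (Real.exp ((K + 1 : ℕ) * p) * h y) := by
    refine (rpf_summable H x).tsum_le_of_sum_le fun T => ?_
    let T' := T.filter fun a => A a (x.1 0) = true
    have hinj : Set.InjOn Z T' := by
      intro a ha a' ha' haa
      have h1 := hadm a (Finset.mem_filter.1 ha).2
      have h2 := hadm a' (Finset.mem_filter.1 ha').2
      rw [hZ a h1, hZ a' h2] at haa
      rw [← hz0 a h1 y, ← hz0 a' h2 y, haa]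
    have e1 : ∑ a ∈ T, term g h x a = ∑ a ∈ T', term g h x a := by
      rw [Finset.sum_filter]
      refine Finset.sum_congr rfl fun a _ => ?_
      split_ifs with h'
      · rfl
      · exact term_neg' h'
    rw [e1]
    have h2 := rpf_word_sum H (K + 1) y (T'.image Z) (by
      intro w hw
      obtain ⟨a, ha, rfl⟩ := Finset.mem_image.1 hw
      have h1 := hadm a (Finset.mem_filter.1 ha).2
      rw [hZ a h1]
      exact hz1 a h1 y)
    rw [Finset.sum_image hinj] at h2
    refine le_trans ?_ (mul_le_mul_of_nonneg_left h2 (Real.exp_pos _).le)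
    rw [Finset.mul_sum]
    refine Finset.sum_le_sum fun a ha => ?_
    have hA := (Finset.mem_filter.1 ha).2
    have h1 := hadm a hA
    rw [term_pos' hA, hZ a h1]
    set w := z a h1 y with hw
    have hw0 : (cons a x hA).1 0 = w.1 0 := (hz0 a h1 y).symm
    have hbk : g (cons a x hA) ≤ D0 + K * B + birkhoff g (K + 1) w := by
      rw [birkhoff_succ]
      have h3 := hD0 (cons a x hA) w hw0
      have h4 : ∑ j ∈ Finset.range K, (-B) ≤ birkhoff g K (shift w) := by
        refine Finset.sum_le_sum fun j hj => hB _ ?_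
        rw [shift_iter, shift_apply]
        have := Finset.mem_range.1 hj
        exact hz2 a h1 y _ (by omega) (by omega)
      simp at h4
      linarith
    calc _ ≤ Real.exp (D0 + K * B + birkhoff g (K + 1) w) * (Real.exp D1 * h w) :=
          mul_le_mul (Real.exp_le_exp.2 hbk) (hD1 _ _ hw0) (H.2.1 _).le (Real.exp_pos _).le
      _ = _ := by
          rw [← mul_assoc, ← mul_assoc, ← Real.exp_add, ← Real.exp_add]
          congr 2; ring
  rw [rpf_tsum H] at hle
  have : h x = Real.exp (-p) * (Real.exp p * h x) := by
    rw [← mul_assoc, ← Real.exp_add]; simp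
  rw [this]
  calc _ ≤ Real.exp (-p) * (Real.exp (D0 + D1 + K * B) * (Real.exp ((K + 1 : ℕ) * p) * h y)) :=
        mul_le_mul_of_nonneg_left hle (Real.exp_pos _).le
    _ = _ := by
        rw [← mul_assoc, ← mul_assoc, ← Real.exp_add, ← Real.exp_add]
        congr 2; push_cast; ring

lemma birkhoff_mul (β : ℝ) (f : MarkovShift A → ℝ) (n : ℕ) (x : MarkovShift A) :
    birkhoff (fun x => β * f x) n x = β * birkhoff f n x := by
  simp [birkhoff, Finset.mul_sum]

lemma log_le_of_le {a b D : ℝ} (ha : 0 < a) (hb : 0 < b) (h : a ≤ Real.exp D * b) :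
    Real.log a - Real.log b ≤ D := by
  have := Real.log_le_log ha h
  rw [Real.log_mul (Real.exp_pos _).ne' hb.ne', Real.log_exp] at this
  linarith

/-- Uniform estimates in `β`. -/
lemma package (hb : FinitelyPrimitive A) {f : MarkovShift A → ℝ} (hW : SatisfiesWalters f)
    (hV : Var1Finite f) {P : ℝ → ℝ} (hP : HasGurevichPressure f (P 1))
    {h : ℝ → MarkovShift A → ℝ} {ν : ℝ → Measure (MarkovShift A)}
    (H : ∀ β : ℝ, 1 < β → IsRPF (fun x => β * f x) (P β) (h β) (ν β)) :
    (∀ β : ℝ, 1 < β → ∀ k, 1 ≤ k → ∀ x y : MarkovShift A, (∀ i < k, x.1 i = y.1 i) →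
      |Real.log (h β x) / β - Real.log (h β y) / β| ≤ waltersSup f k) ∧
    ∃ C : ℝ, ∀ β : ℝ, 1 < β →
      (∀ x y : MarkovShift A, Real.log (h β x) / β - Real.log (h β y) / β ≤ C) ∧
      P β / β ≤ C := by
  obtain ⟨c, hc, hc0, hcf⟩ := summable_weights hb hV hP
  set T := max 1 (∑' a, c a) with hT
  have hT1 : 1 ≤ T := le_max_left _ _
  have hT0 : 0 < T := by linarith
  set τ := Real.log T with hτ
  have hτ0 : 0 ≤ τ := Real.log_nonneg hT1
  have hfτ : ∀ x, f x ≤ τ := by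
    intro x
    rw [hτ, Real.le_log_iff_exp_le hT0]
    exact (hcf x).trans ((hc.le_tsum _ fun a _ => hc0 a).trans (le_max_right _ _))
  have hfc := walters_continuous hW
  have hdom : ∀ β : ℝ, 1 < β → Dom (fun x => β * f x) (fun a => Real.exp ((β - 1) * τ) * c a) := by
    intro β hβ
    refine ⟨continuous_const.mul hfc, hc.mul_left _, fun a => mul_nonneg (Real.exp_pos _).le (hc0 a),
      fun x => ?_⟩
    calc Real.exp (β * f x) ≤ Real.exp ((β - 1) * τ + f x) := by
          apply Real.exp_le_exp.2
          nlinarith [hfτ x, mul_le_mul_of_nonneg_left (hfτ x) (sub_nonneg.2 hβ.le)]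
      _ = Real.exp ((β - 1) * τ) * Real.exp (f x) := Real.exp_add _ _
      _ ≤ _ := mul_le_mul_of_nonneg_left (hcf x) (Real.exp_pos _).le
  have hreg : ∀ β : ℝ, 1 < β → ∀ k, 1 ≤ k → ∀ x y : MarkovShift A, (∀ i < k, x.1 i = y.1 i) →
      h β x ≤ Real.exp (β * waltersSup f k) * h β y := by
    intro β hβ k hk x y hxy
    refine rpf_regular hb (hdom β hβ) (H β hβ) _ k hk ?_ x y hxy
    intro n hn z z' hz
    have := (abs_le.1 (walters_bound hW hk hn z z' hz)).2
    rw [birkhoff_mul, birkhoff_mul]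
    nlinarith
  have hpτ : ∀ β : ℝ, 1 < β → P β ≤ β * τ := by
    intro β hβ
    have := rpf_exp_le (hdom β hβ) (H β hβ)
    rw [tsum_mul_left] at this
    rw [← Real.exp_le_exp]
    calc _ ≤ _ := this
      _ ≤ Real.exp ((β - 1) * τ) * T :=
        mul_le_mul_of_nonneg_left (le_max_right _ _) (Real.exp_pos _).le
      _ = Real.exp (β * τ) := by
        rw [← Real.exp_log hT0, ← hτ, ← Real.exp_add]; congr 1; ring
  constructor
  · intro β hβ k hk x y hxy
    have hβ0 : 0 < β := by linarith
    have h1 := log_le_of_le ((H β hβ).2.1 x) ((H β hβ).2.1 y) (hreg β hβ k hk x y hxy)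
    have h2 := log_le_of_le ((H β hβ).2.1 y) ((H β hβ).2.1 x)
      (hreg β hβ k hk y x fun i hi => (hxy i hi).symm)
    rw [← sub_div, abs_div, abs_of_pos hβ0, div_le_iff₀ hβ0, abs_le]
    constructor <;> linarith
  · obtain ⟨K, F, hbr⟩ := bridge hb
    obtain ⟨C, hC0, hC⟩ := var1_bound hV
    obtain ⟨B, hB0, hB⟩ := finset_bound hV F
    refine ⟨max (C + waltersSup f 1 + K * B + K * τ) τ, fun β hβ => ?_⟩
    have hβ0 : 0 < β := by linarith
    constructor
    · intro x y
      refine le_max_of_le_left ?_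
      have h1 := rpf_osc (H β hβ) hbr (β * C) (β * waltersSup f 1) (β * B) (by
          intro x y hxy
          have := (abs_le.1 (hC x y hxy)).2
          nlinarith) (by
          intro x y hxy
          refine hreg β hβ 1 le_rfl x y fun i hi => ?_
          obtain rfl : i = 0 := by omega
          exact hxy) (by
          intro x hx
          have := (abs_le.1 (hB x hx)).1
          nlinarith) x y
      have h2 := log_le_of_le ((H β hβ).2.1 x) ((H β hβ).2.1 y) h1
      rw [← sub_div, div_le_iff₀ hβ0]
      have h3 : (K : ℝ) * P β ≤ K * (β * τ) :=
        mul_le_mul_of_nonneg_left (hpτ β hβ) (Nat.cast_nonneg K)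
      linarith
    · refine le_max_of_le_right ?_
      rw [div_le_iff₀ hβ0]
      linarith [hpτ β hβ]

end MarkovShift

namespace MarkovShift
variable {A : ℕ → ℕ → Bool}

lemma isClosedEmbedding_val :
    IsClosedEmbedding (fun x : MarkovShift A => x.1) := by
  have : IsClosed {x : ℕ → ℕ | ∀ i, A (x i) (x (i + 1)) = true} := by
    have e : {x : ℕ → ℕ | ∀ i, A (x i) (x (i + 1)) = true} =
        ⋂ i, {x : ℕ → ℕ | A (x i) (x (i + 1)) = true} := by ext; simp
    rw [e]
    refine isClosed_iInter fun i => ?_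
    have hc2 : Continuous (fun x : ℕ → ℕ => (x i, x (i + 1))) := by fun_prop
    have hc : Continuous (fun x : ℕ → ℕ => A (x i) (x (i + 1))) :=
      (continuous_of_discreteTopology (f := fun q : ℕ × ℕ => A q.1 q.2)).comp hc2
    exact (isClosed_discrete {true}).preimage hc
  exact this.isClosedEmbedding_subtypeVal

instance instMetrizable : TopologicalSpace.MetrizableSpace (MarkovShift A) :=
  isClosedEmbedding_val.isEmbedding.metrizableSpace

lemma isCompact_box (G : ℕ → Finset ℕ) : IsCompact {x : MarkovShift A | ∀ i, x.1 i ∈ G i} := by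
  have h1 : IsCompact (Set.pi Set.univ fun i => (G i : Set ℕ)) :=
    isCompact_univ_pi fun i => (G i).finite_toSet.isCompact
  have h2 := isClosedEmbedding_val (A := A) |>.isCompact_preimage h1
  convert h2 using 1
  ext x
  simp

/-- Empirical measures. -/
noncomputable def emp (z : ℕ → MarkovShift A) (N : ℕ) : Measure (MarkovShift A) :=
  ((N + 1 : ℕ) : ℝ≥0∞)⁻¹ • ∑ n ∈ Finset.range (N + 1), Measure.dirac (z n)

lemma emp_prob (z : ℕ → MarkovShift A) (N : ℕ) : IsProbabilityMeasure (emp z N) := by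
  constructor
  simp only [emp, Measure.smul_apply, Measure.finsetSum_apply, measure_univ, Finset.sum_const,
    Finset.card_range, smul_eq_mul, nsmul_eq_mul, mul_one]
  exact ENNReal.inv_mul_cancel (by simp) (ENNReal.natCast_ne_top _)

lemma emp_integral (z : ℕ → MarkovShift A) (N : ℕ) {g : MarkovShift A → ℝ} (hg : Continuous g) :
    ∫ x, g x ∂(emp z N) = (∑ n ∈ Finset.range (N + 1), g (z n)) / (N + 1 : ℕ) := by
  have hi : ∀ n, Integrable g (Measure.dirac (z n)) := fun n => by
    refine (integrable_dirac' hg.measurable.stronglyMeasurable ?_)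
    exact enorm_lt_top
  rw [emp, integral_smul_measure, integral_finsetSum_measure fun n _ => hi n]
  simp only [integral_dirac' _ _ hg.measurable.stronglyMeasurable]
  rw [ENNReal.toReal_inv, ENNReal.toReal_natCast, smul_eq_mul, div_eq_inv_mul]

lemma kb {f V : MarkovShift A → ℝ} (hfc : Continuous f)
    (hfin : ∀ t, Set.Finite {a | ∃ x : MarkovShift A, x.1 0 = a ∧ t ≤ f x})
    (hVc : Continuous V) (hVb : BoundedFun V) (c : ℝ)
    (hsub : ∀ x, f x + V x - V (shift x) - c ≤ 0)
    (hcal : ∀ y, ∃ x, shift x = y ∧ f x + V x - V (shift x) - c = 0) (y : MarkovShift A) :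
    ∃ μ : Measure (MarkovShift A), IsInvariantProb μ ∧ Integrable f μ ∧ ∫ x, f x ∂μ = c ∧
      ∀ D : MarkovShift A → ℝ, Continuous D → BoundedFun D →
        (∀ x, f x + V x - V (shift x) - c = 0 → D (shift x) ≤ D x) → D y ≤ ∫ x, D x ∂μ := by
  classical
  choose pre hpre1 hpre2 using hcal
  obtain ⟨C, hC⟩ := hVb
  let w : ℕ → MarkovShift A := fun n => pre^[n] y
  have hw0 : w 0 = y := rfl
  have hws : ∀ n, w (n + 1) = pre (w n) := fun n => Function.iterate_succ_apply' _ _ _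
  have hwshift : ∀ n, shift (w (n + 1)) = w n := fun n => by rw [hws, hpre1]
  have hwR : ∀ n, f (w (n + 1)) + V (w (n + 1)) - V (shift (w (n + 1))) - c = 0 := fun n => by
    rw [hws]; exact hpre2 _
  let G : ℕ → Finset ℕ := fun i => (hfin (c - 2 * C)).toFinset ∪ (Finset.range (i + 1)).image y.1
  have hG : ∀ n i, (w n).1 i ∈ G i := by
    intro n
    induction n with
    | zero =>
      intro i
      exact Finset.mem_union_right _ (Finset.mem_image.2 ⟨i, by simp, rfl⟩)
    | succ n ih =>
      intro i
      cases i with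
      | zero =>
        refine Finset.mem_union_left _ ((hfin (c - 2 * C)).mem_toFinset.2 ⟨w (n + 1), rfl, ?_⟩)
        have h1 := abs_le.1 (hC (w (n + 1)))
        have h2 := abs_le.1 (hC (shift (w (n + 1))))
        have h3 := hwR n
        linarith
      | succ i =>
        have h1 := ih i
        rw [← hwshift n, shift_apply] at h1
        rcases Finset.mem_union.1 h1 with h1 | h1
        · exact Finset.mem_union_left _ h1
        · refine Finset.mem_union_right _ ?_
          obtain ⟨j, hj, hj'⟩ := Finset.mem_image.1 h1
          exact Finset.mem_image.2 ⟨j, by simp at hj ⊢; omega, hj'⟩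
  let z : ℕ → MarkovShift A := fun n => w (n + 1)
  let m : ℕ → ProbabilityMeasure (MarkovShift A) := fun N => ⟨emp z N, emp_prob z N⟩
  have htight : IsTightMeasureSet
      {((μ : ProbabilityMeasure (MarkovShift A)) : Measure (MarkovShift A)) | μ ∈ Set.range m} := by
    rw [isTightMeasureSet_iff_exists_isCompact_measure_compl_le]
    intro ε hε
    refine ⟨_, isCompact_box G, ?_⟩
    rintro _ ⟨_, ⟨N, rfl⟩, rfl⟩
    refine le_of_eq_of_le ?_ bot_le
    change emp z N _ = 0
    rw [emp, Measure.smul_apply, Measure.finsetSum_apply, Finset.sum_eq_zero, smul_zero]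
    intro n _
    rw [Measure.dirac_apply' _ (isCompact_box G).measurableSet.compl]
    apply Set.indicator_of_notMem
    intro h
    exact h (hG (n + 1))
  have hcomp := isCompact_closure_of_isTightMeasureSet htight
  let U : Ultrafilter ℕ := Ultrafilter.of atTop
  have hU : (U : Filter ℕ) ≤ atTop := Ultrafilter.of_le _
  obtain ⟨μ, _, hμ⟩ := hcomp.ultrafilter_le_nhds' (U.map m)
    (Filter.mem_of_superset (Filter.range_mem_map) subset_closure)
  have htend : Tendsto m U (𝓝 μ) := hμ
  rw [ProbabilityMeasure.tendsto_iff_forall_integral_tendsto] at htend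
  have hlim : ∀ g : MarkovShift A → ℝ, Continuous g → BoundedFun g →
      Tendsto (fun N : ℕ => (∑ n ∈ Finset.range (N + 1), g (z n)) / ((N + 1 : ℕ) : ℝ)) U
        (𝓝 (∫ x, g x ∂(μ : Measure (MarkovShift A)))) := by
    intro g hg hgb
    obtain ⟨B, hB⟩ := hgb
    have := htend (BoundedContinuousFunction.ofNormedAddCommGroup g hg B hB)
    refine this.congr fun N => ?_
    exact emp_integral z N hg
  have hμp : IsProbabilityMeasure (μ : Measure (MarkovShift A)) := μ.2
  have hbint : ∀ g : MarkovShift A → ℝ, Continuous g → BoundedFun g →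
      Integrable g (μ : Measure (MarkovShift A)) := by
    intro g hg ⟨B, hB⟩
    exact (integrable_const B).mono' hg.measurable.aestronglyMeasurable (Eventually.of_forall hB)
  have hsm : Measurable (shift : MarkovShift A → MarkovShift A) := continuous_shift.measurable
  have hinv : (μ : Measure (MarkovShift A)).map shift = μ := by
    have : IsProbabilityMeasure ((μ : Measure (MarkovShift A)).map shift) :=
      Measure.isProbabilityMeasure_map hsm.aemeasurable
    apply ext_of_forall_integral_eq_of_IsFiniteMeasure
    intro g
    rw [integral_map hsm.aemeasurable g.continuous.measurable.aestronglyMeasurable]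
    obtain ⟨B, hB⟩ : BoundedFun (g : MarkovShift A → ℝ) := ⟨‖g‖, fun x => g.norm_coe_le_norm x⟩
    have l1 := hlim (fun x => g (shift x)) (g.continuous.comp continuous_shift)
      ⟨B, fun x => hB _⟩
    have l2 := hlim g g.continuous ⟨B, hB⟩
    have l3 := l1.sub l2
    have l4 : Tendsto (fun N : ℕ => 2 * B / ((N : ℝ) + 1)) U (𝓝 0) := by
      have : Tendsto (fun N : ℕ => 2 * B / ((N : ℝ) + 1)) atTop (𝓝 0) := by
        have := (tendsto_one_div_add_atTop_nhds_zero_nat (𝕜 := ℝ)).const_mul (2 * B)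
        simpa [div_eq_mul_inv] using this
      exact this.mono_left hU
    have l5 : Tendsto (fun N : ℕ => (∑ n ∈ Finset.range (N + 1), g (shift (z n))) / ((N + 1 : ℕ) : ℝ)
        - (∑ n ∈ Finset.range (N + 1), g (z n)) / ((N + 1 : ℕ) : ℝ)) U (𝓝 0) := by
      refine squeeze_zero_norm (fun N => ?_) l4
      rw [← sub_div, ← Finset.sum_sub_distrib]
      have : ∑ n ∈ Finset.range (N + 1), (g (shift (z n)) - g (z n)) = g (w 0) - g (w (N + 1)) := by
        rw [← Finset.sum_range_sub' (fun n => g (w n))]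
        refine Finset.sum_congr rfl fun n _ => ?_
        simp only [z]
        rw [hwshift]
      rw [this, norm_div]
      push_cast
      have e : ‖((N : ℝ) + 1)‖ = (N : ℝ) + 1 := Real.norm_of_nonneg (by positivity)
      rw [e]
      gcongr
      have h1 := hB (w 0)
      have h2 := hB (w (N + 1))
      have := abs_sub (g (w 0)) (g (w (N + 1)))
      rw [Real.norm_eq_abs]
      linarith
    have := tendsto_nhds_unique l3 l5
    linarith
  have hR : ∀ᵐ x ∂(μ : Measure (MarkovShift A)), f x + V x - V (shift x) - c = 0 := by
    let R : MarkovShift A → ℝ := fun x => f x + V x - V (shift x) - c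
    have hRc : Continuous R :=
      ((hfc.add hVc).sub (hVc.comp continuous_shift)).sub continuous_const
    let R' : MarkovShift A → ℝ := fun x => -max (R x) (-1)
    have hR'c : Continuous R' := (hRc.max continuous_const).neg
    have hR'0 : ∀ x, 0 ≤ R' x := fun x => by
      have : max (R x) (-1) ≤ 0 := max_le (hsub x) (by norm_num)
      simp only [R']; linarith
    have hR'b : BoundedFun R' := ⟨1, fun x => by
      rw [abs_of_nonneg (hR'0 x)]
      have := le_max_right (R x) (-1)
      simp only [R']; linarith⟩
    have l1 := hlim R' hR'c hR'b
    have l2 : ∀ n, R' (z n) = 0 := fun n => by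
      have : R (z n) = 0 := hwR n
      simp [R', this]
    simp only [l2, Finset.sum_const_zero, zero_div] at l1
    have h0 : ∫ x, R' x ∂(μ : Measure (MarkovShift A)) = 0 :=
      (tendsto_nhds_unique l1 tendsto_const_nhds)
    rw [integral_eq_zero_iff_of_nonneg hR'0 (hbint R' hR'c hR'b)] at h0
    filter_upwards [h0] with x hx
    have hx : -max (R x) (-1) = 0 := hx
    have h1 : max (R x) (-1) = 0 := by linarith
    rcases max_choice (R x) (-1) with h2 | h2
    · rw [h2] at h1; exact h1
    · rw [h2] at h1; norm_num at h1
  have hVi := hbint V hVc ⟨C, hC⟩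
  have hVsi := hbint (fun x => V (shift x)) (hVc.comp continuous_shift) ⟨C, fun x => hC _⟩
  have hfe : f =ᵐ[(μ : Measure (MarkovShift A))] fun x => (V (shift x) - V x) + c := by
    filter_upwards [hR] with x hx
    linarith
  have hVeq : ∫ x, V (shift x) ∂(μ : Measure (MarkovShift A)) = ∫ x, V x ∂(μ : Measure (MarkovShift A)) := by
    conv_rhs => rw [← hinv]
    rw [integral_map hsm.aemeasurable hVc.measurable.aestronglyMeasurable]
  refine ⟨μ, ⟨hμp, hinv⟩, ?_, ?_, ?_⟩
  · exact ((hVsi.sub hVi).add (integrable_const c)).congr hfe.symm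
  · have hd : Integrable (fun x => V (shift x) - V x) (μ : Measure (MarkovShift A)) := hVsi.sub hVi
    rw [integral_congr_ae hfe, integral_add hd (integrable_const c),
      integral_sub hVsi hVi, hVeq]
    simp
  · intro D hDc hDb hD
    have hmono : ∀ n, D y ≤ D (w n) := by
      intro n
      induction n with
      | zero => exact le_rfl
      | succ n ih =>
        have := hD _ (hwR n)
        rw [hwshift] at this
        exact ih.trans this
    refine ge_of_tendsto' (hlim D hDc hDb) fun N => ?_
    rw [le_div_iff₀ (by positivity)]
    have : ∑ n ∈ Finset.range (N + 1), D y ≤ ∑ n ∈ Finset.range (N + 1), D (z n) :=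
      Finset.sum_le_sum fun n _ => hmono (n + 1)
    simp only [Finset.sum_const, Finset.card_range, nsmul_eq_mul] at this
    linarith

end MarkovShift

namespace MarkovShift
variable {A : ℕ → ℕ → Bool}

lemma qexp {f h : MarkovShift A → ℝ} {p β : ℝ} {ν : Measure (MarkovShift A)} (hβ : 1 < β)
    (H : IsRPF (fun x => β * f x) p h ν) (z : MarkovShift A) :
    Real.exp (β * (f z + Real.log (h z) / β - Real.log (h (shift z)) / β - p / β)) =
      Real.exp (β * f z) * h z / (Real.exp p * h (shift z)) := by
  have hβ0 : β ≠ 0 := by linarith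
  have e : β * (f z + Real.log (h z) / β - Real.log (h (shift z)) / β - p / β) =
      (β * f z + Real.log (h z)) - (p + Real.log (h (shift z))) := by
    field_simp
    ring
  rw [e, Real.exp_sub, Real.exp_add, Real.exp_add, Real.exp_log (H.2.1 _), Real.exp_log (H.2.1 _)]

lemma q_nonpos {f h : MarkovShift A → ℝ} {p β : ℝ} {ν : Measure (MarkovShift A)} (hβ : 1 < β)
    (H : IsRPF (fun x => β * f x) p h ν) (z : MarkovShift A) :
    f z + Real.log (h z) / β - Real.log (h (shift z)) / β - p / β ≤ 0 := by
  have h1 := rpf_le H z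
  have h2 := qexp hβ H z
  have h3 : Real.exp (β * f z) * h z / (Real.exp p * h (shift z)) ≤ 1 :=
    (div_le_one (mul_pos (Real.exp_pos _) (H.2.1 _))).2 h1
  rw [← h2, Real.exp_le_one_iff] at h3
  by_contra hc
  push Not at hc
  have := mul_pos (by linarith : 0 < β) hc
  linarith

lemma exists_lim (U : Ultrafilter ℝ) (hU : (U : Filter ℝ) ≤ atTop) (g : ℝ → ℝ) (a b : ℝ)
    (h : ∀ β, 1 < β → a ≤ g β ∧ g β ≤ b) : ∃ l, a ≤ l ∧ l ≤ b ∧ Tendsto g U (𝓝 l) := by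
  have h1 : ∀ᶠ β in (U : Filter ℝ), g β ∈ Set.Icc a b := by
    filter_upwards [hU (eventually_gt_atTop 1)] with β hβ
    exact h β hβ
  obtain ⟨l, hl, hl'⟩ := (isCompact_Icc (a := a) (b := b)).ultrafilter_le_nhds' (U.map g) h1
  exact ⟨l, hl.1, hl.2, hl'⟩

lemma limit_cal (hb : FinitelyPrimitive A) {f : MarkovShift A → ℝ} (hW : SatisfiesWalters f)
    (hV : Var1Finite f) {P : ℝ → ℝ} (hP : HasGurevichPressure f (P 1))
    {h : ℝ → MarkovShift A → ℝ} {ν : ℝ → Measure (MarkovShift A)}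
    (H : ∀ β : ℝ, 1 < β → IsRPF (fun x => β * f x) (P β) (h β) (ν β))
    (x0 : MarkovShift A) (U : Ultrafilter ℝ) (hU : (U : Filter ℝ) ≤ atTop) :
    ∃ (W : MarkovShift A → ℝ) (c : ℝ),
      (∀ x, Tendsto (fun β => Real.log (h β x) / β - Real.log (h β x0) / β) U (𝓝 (W x))) ∧
      Tendsto (fun β => P β / β) U (𝓝 c) ∧
      (∀ k, 1 ≤ k → ∀ x y : MarkovShift A, (∀ i < k, x.1 i = y.1 i) →
        |W x - W y| ≤ waltersSup f k) ∧ BoundedFun W ∧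
      (∀ x, f x + W x - W (shift x) - c ≤ 0) ∧
      (∀ y, ∃ x, shift x = y ∧ f x + W x - W (shift x) - c = 0) := by
  obtain ⟨hreg, C, hC⟩ := package hb hW hV hP H
  obtain ⟨cw, hcs, hc0, hcw⟩ := summable_weights hb hV hP
  have hev : ∀ᶠ β in (U : Filter ℝ), 1 < β := hU (eventually_gt_atTop 1)
  have hPlow : ∀ β, 1 < β → f x0 - C ≤ P β / β := fun β hβ => by
    have h1 := q_nonpos hβ (H β hβ) x0
    have h2 := (hC β hβ).1 (shift x0) x0
    linarith
  have hWb : ∀ x β, 1 < β → -C ≤ Real.log (h β x) / β - Real.log (h β x0) / β ∧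
      Real.log (h β x) / β - Real.log (h β x0) / β ≤ C := fun x β hβ =>
    ⟨by have := (hC β hβ).1 x0 x; linarith, (hC β hβ).1 x x0⟩
  choose W hW1 hW2 hWt using fun x => exists_lim U hU _ (-C) C (hWb x)
  obtain ⟨c, _, _, hct⟩ := exists_lim U hU (fun β => P β / β) (f x0 - C) C
    fun β hβ => ⟨hPlow β hβ, (hC β hβ).2⟩
  have hqt : ∀ z, Tendsto (fun β => f z + Real.log (h β z) / β - Real.log (h β (shift z)) / β
      - P β / β) U (𝓝 (f z + W z - W (shift z) - c)) := fun z => by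
    have := (((hWt z).const_add (f z)).sub (hWt (shift z))).sub hct
    refine this.congr fun β => ?_
    ring
  have hsub : ∀ x, f x + W x - W (shift x) - c ≤ 0 := fun x => by
    refine le_of_tendsto (hqt x) ?_
    filter_upwards [hev] with β hβ
    exact q_nonpos hβ (H β hβ) x
  refine ⟨W, c, hWt, hct, ?_, ⟨C, fun x => abs_le.2 ⟨hW1 x, hW2 x⟩⟩, hsub, ?_⟩
  · intro k hk x y hxy
    refine le_of_tendsto ((hWt x).sub (hWt y)).abs ?_
    filter_upwards [hev] with β hβ
    have := hreg β hβ k hk x y hxy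
    rwa [sub_sub_sub_cancel_right]
  · intro y
    by_contra hcon
    push Not at hcon
    have hlt : ∀ x, shift x = y → f x + W x - W (shift x) - c < 0 := fun x hx =>
      lt_of_le_of_ne (hsub x) (hcon x hx)
    let T : ℝ → ℕ → ℝ := fun β a => term (fun x => β * f x) (h β) y a / (Real.exp (P β) * h β y)
    have hTsum : ∀ β, 1 < β → ∑' a, T β a = 1 := fun β hβ => by
      simp only [T]
      rw [tsum_div_const, rpf_tsum (H β hβ)]
      exact div_self (mul_pos (Real.exp_pos _) ((H β hβ).2.1 y)).ne'
    have hTe : ∀ β, 1 < β → ∀ a (ha : A a (y.1 0) = true), T β a =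
        Real.exp (β * (f (cons a y ha) + Real.log (h β (cons a y ha)) / β
          - Real.log (h β (shift (cons a y ha))) / β - P β / β)) := fun β hβ a ha => by
      rw [qexp hβ (H β hβ), shift_cons]
      simp only [T]
      rw [term_pos' ha]
    have hT0 : ∀ β a, ¬ A a (y.1 0) = true → T β a = 0 := fun β a ha => by
      simp only [T]
      rw [term_neg' ha, zero_div]
    have hlim : Tendsto (fun β => ∑' a, T β a) U (𝓝 (∑' _ : ℕ, (0 : ℝ))) := by
      refine tendsto_tsum_of_dominated_convergence
        (bound := fun a => cw a * Real.exp (C - (f x0 - C))) (hcs.mul_right _) ?_ ?_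
      · intro a
        by_cases ha : A a (y.1 0) = true
        · have h1 := hqt (cons a y ha)
          have h2 : Tendsto (fun β : ℝ => β) U atTop := hU
          have h3 := h2.atTop_mul_neg (hlt _ (shift_cons ..)) h1
          have h4 := Real.tendsto_exp_atBot.comp h3
          refine h4.congr' ?_
          filter_upwards [hev] with β hβ
          exact (hTe β hβ a ha).symm
        · exact tendsto_const_nhds.congr fun β => (hT0 β a ha).symm
      · filter_upwards [hev] with β hβ a
        by_cases ha : A a (y.1 0) = true
        · rw [hTe β hβ a ha, Real.norm_of_nonneg (Real.exp_pos _).le]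
          have h1 := q_nonpos hβ (H β hβ) (cons a y ha)
          have h2 := (hC β hβ).1 (cons a y ha) (shift (cons a y ha))
          have h3 := hPlow β hβ
          have h4 : Real.exp (f (cons a y ha)) ≤ cw a := hcw (cons a y ha)
          refine le_trans ?_ (mul_le_mul_of_nonneg_right h4 (Real.exp_pos _).le)
          rw [← Real.exp_add, Real.exp_le_exp]
          nlinarith
        · rw [hT0 β a ha, norm_zero]
          exact mul_nonneg (hc0 a) (Real.exp_pos _).le
    rw [tsum_zero] at hlim
    have h1 : Tendsto (fun β => ∑' a, T β a) U (𝓝 1) := by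
      refine tendsto_const_nhds.congr' ?_
      filter_upwards [hev] with β hβ
      exact (hTsum β hβ).symm
    exact zero_ne_one (tendsto_nhds_unique hlim h1)

lemma hfin_of (hb : FinitelyPrimitive A) {f : MarkovShift A → ℝ}
    (hV : Var1Finite f) {p : ℝ} (hP : HasGurevichPressure f p) (t : ℝ) :
    Set.Finite {a | ∃ x : MarkovShift A, x.1 0 = a ∧ t ≤ f x} := by
  obtain ⟨cw, hcs, hc0, hcw⟩ := summable_weights hb hV hP
  have h1 := hcs.tendsto_cofinite_zero.eventually (gt_mem_nhds (Real.exp_pos t))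
  rw [Filter.eventually_cofinite] at h1
  refine h1.subset ?_
  rintro _ ⟨x, rfl, hx⟩
  exact not_lt.2 ((Real.exp_le_exp.2 hx).trans (hcw x))

lemma uniq_cal {f : MarkovShift A → ℝ} (hfc : Continuous f)
    (hfin : ∀ t, Set.Finite {a | ∃ x : MarkovShift A, x.1 0 = a ∧ t ≤ f x})
    {μmax : Measure (MarkovShift A)} (huniq : ∀ ν', IsMaximizing f ν' → ν' = μmax)
    {V W : MarkovShift A → ℝ} (hV : IsCalibratedSubaction f V) (hW : IsCalibratedSubaction f W)
    (y : MarkovShift A) : V y - W y ≤ ∫ x, (V x - W x) ∂μmax := by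
  obtain ⟨μ, h1, h2, h3, h4⟩ := kb hfc hfin hV.1 hV.2.1 (mf f) hV.2.2.1 hV.2.2.2 y
  have e := huniq μ ⟨h1, h2, h3⟩
  subst e
  refine h4 (fun x => V x - W x) (hV.1.sub hW.1) ?_ ?_
  · obtain ⟨B, hB⟩ := hV.2.1
    obtain ⟨B', hB'⟩ := hW.2.1
    exact ⟨B + B', fun x => (abs_sub _ _).trans (add_le_add (hB x) (hB' x))⟩
  · intro x hx
    have := hW.2.2.1 x
    linarith

lemma mf_eq {f W : MarkovShift A → ℝ} (hfc : Continuous f)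
    (hfin : ∀ t, Set.Finite {a | ∃ x : MarkovShift A, x.1 0 = a ∧ t ≤ f x})
    (hWc : Continuous W) (hWb : BoundedFun W) (c : ℝ)
    (hsub : ∀ x, f x + W x - W (shift x) - c ≤ 0)
    (hcal : ∀ y, ∃ x, shift x = y ∧ f x + W x - W (shift x) - c = 0) (y : MarkovShift A) :
    mf f = c := by
  obtain ⟨μ, h1, h2, h3, -⟩ := kb hfc hfin hWc hWb c hsub hcal y
  have hub : ∀ d ∈ {d | ∃ μ : Measure (MarkovShift A),
      IsInvariantProb μ ∧ Integrable f μ ∧ ∫ x, f x ∂μ = d}, d ≤ c := by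
    rintro d ⟨ν, ⟨hp, hinv⟩, hi, rfl⟩
    obtain ⟨B, hB⟩ := hWb
    have hsm : Measurable (shift : MarkovShift A → MarkovShift A) := continuous_shift.measurable
    have i1 : Integrable W ν := (integrable_const B).mono' hWc.measurable.aestronglyMeasurable
      (Eventually.of_forall hB)
    have i2 : Integrable (fun x => W (shift x)) ν := (integrable_const B).mono'
      (hWc.comp continuous_shift).measurable.aestronglyMeasurable
      (Eventually.of_forall fun x => hB _)
    have e : ∫ x, W (shift x) ∂ν = ∫ x, W x ∂ν := by
      conv_rhs => rw [← hinv]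
      rw [integral_map hsm.aemeasurable hWc.measurable.aestronglyMeasurable]
    have hd : Integrable (fun x => W (shift x) - W x) ν := i2.sub i1
    have hle : ∫ x, f x ∂ν ≤ ∫ x, ((W (shift x) - W x) + c) ∂ν :=
      integral_mono hi (hd.add (integrable_const c)) fun x => by
        have := hsub x
        simp only
        linarith
    rw [integral_add hd (integrable_const c), integral_sub i2 i1, e] at hle
    simpa using hle
  exact le_antisymm (csSup_le ⟨_, μ, h1, h2, h3⟩ hub) (le_csSup ⟨c, hub⟩ ⟨μ, h1, h2, h3⟩)

lemma birkhoff_cob {f V Rm : MarkovShift A → ℝ} {m : ℝ}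
    (hRm : ∀ x, Rm x = f x + V x - V (shift x) - m) (n : ℕ) (x : MarkovShift A) :
    birkhoff Rm n x = birkhoff f n x + V x - V (shift^[n] x) - n * m := by
  induction n with
  | zero => simp [birkhoff]
  | succ n ih =>
    simp only [birkhoff] at ih ⊢
    rw [Finset.sum_range_succ, Finset.sum_range_succ, ih, hRm, Function.iterate_succ_apply']
    push_cast
    ring

end MarkovShift

namespace MarkovShift

/-- `g_β/β → R₋ = f + V - V∘σ - m(f)` uniformly on compact sets, with the stated
variation bounds `Var_n(g_β/β) ≤ M_n`, `Var_n(R₋) ≤ M_n`, `M_n → 0`, and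
`Var_{n+k}(R₋ⁿ) ≤ Var_{n+k}(S_n f) + M_{n+k} + M_k`. -/
theorem gbeta_converges_to_Rminus
    (A : ℕ → ℕ → Bool)
    (hmix : TopologicallyMixing A)
    (hbip : FinitelyPrimitive A)
    (f : MarkovShift A → ℝ)
    (hWalters : SatisfiesWalters f)
    (hVar1 : Var1Finite f)
    (P : ℝ → ℝ)
    (hPfin : HasGurevichPressure f (P 1))
    (μmax : Measure (MarkovShift A))
    (hmax : IsMaximizing f μmax)
    (huniq : ∀ ν', IsMaximizing f ν' → ν' = μmax)
    (h : ℝ → MarkovShift A → ℝ)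
    (ν : ℝ → Measure (MarkovShift A))
    (hRPF : ∀ β : ℝ, 1 < β → IsRPF (fun x => β * f x) (P β) (h β) (ν β))
    (V : MarkovShift A → ℝ)
    (hV : IsCalibratedSubaction f V)
    (gβ : ℝ → MarkovShift A → ℝ)
    (hgβ : ∀ β x, gβ β x =
      β * f x + Real.log (h β x) - Real.log (h β (shift x)) - P β)
    (Rm : MarkovShift A → ℝ)
    (hRm : ∀ x, Rm x = f x + V x - V (shift x) - mf f) :
    (∀ K : Set (MarkovShift A), IsCompact K →
        TendstoUniformlyOn (fun (β : ℝ) (x : MarkovShift A) => gβ β x / β) Rm atTop K) ∧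
      ∃ M : ℕ → ℝ, Tendsto M atTop (𝓝 0) ∧
        (∃ N : ℕ, ∀ n ≥ N,
          (∀ β : ℝ, 1 < β → ∀ x y : MarkovShift A, (∀ i < n, x.1 i = y.1 i) →
            |gβ β x / β - gβ β y / β| ≤ M n) ∧
          (∀ x y : MarkovShift A, (∀ i < n, x.1 i = y.1 i) → |Rm x - Rm y| ≤ M n)) ∧
        (∀ n k : ℕ, 1 ≤ n → 1 ≤ k → ∀ x y : MarkovShift A, (∀ i < n + k, x.1 i = y.1 i) →
          |birkhoff Rm n x - birkhoff Rm n y| ≤ varBirk f n (n + k) + M (n + k) + M k) := by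
  have hne : Nonempty (MarkovShift A) := by
    have hp := hmax.1.1
    exact μmax.nonempty_of_neZero
  obtain ⟨x0⟩ := hne
  have hfc := walters_continuous hWalters
  have hfin := hfin_of hbip hVar1 hPfin
  obtain ⟨hreg, C, hC⟩ := package hbip hWalters hVar1 hPfin hRPF
  -- identification of every ultrafilter limit
  have key : ∀ U : Ultrafilter ℝ, (U : Filter ℝ) ≤ atTop →
      (∀ x, Tendsto (fun β => Real.log (h β x) / β - Real.log (h β x0) / β) U
        (𝓝 (V x - V x0))) ∧ Tendsto (fun β => P β / β) U (𝓝 (mf f)) := by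
    intro U hU
    obtain ⟨W, c, hWt, hct, hmod, hWb, hsub, hcal⟩ :=
      limit_cal hbip hWalters hVar1 hPfin hRPF x0 U hU
    have hWc : Continuous W := continuous_of_modulus W _ hWalters.2 1 hmod
    have hc := mf_eq hfc hfin hWc hWb c hsub hcal x0
    subst hc
    have hWcal : IsCalibratedSubaction f W := ⟨hWc, hWb, hsub, hcal⟩
    refine ⟨fun x => ?_, hct⟩
    have hconst : ∀ y, V y - W y = ∫ x, (V x - W x) ∂μmax := fun y => by
      have h1 := uniq_cal hfc hfin huniq hV hWcal y
      have h2 := uniq_cal hfc hfin huniq hWcal hV y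
      have e : ∫ x, (W x - V x) ∂μmax = -∫ x, (V x - W x) ∂μmax := by
        rw [← integral_neg]
        exact integral_congr_ae (Eventually.of_forall fun x => (neg_sub _ _).symm)
      rw [e] at h2
      linarith
    have hW0 : W x0 = 0 := by
      refine tendsto_nhds_unique (hWt x0) ?_
      simp
    have e : V x - V x0 = W x := by
      have h1 := hconst x
      have h2 := hconst x0
      linarith
    rw [e]
    exact hWt x
  have hVt : ∀ x, Tendsto (fun β => Real.log (h β x) / β - Real.log (h β x0) / β) atTop
      (𝓝 (V x - V x0)) := fun x =>
    tendsto_iff_ultrafilter _ _ _ |>.2 fun U hU => (key U hU).1 x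
  have hPt : Tendsto (fun β => P β / β) atTop (𝓝 (mf f)) :=
    tendsto_iff_ultrafilter _ _ _ |>.2 fun U hU => (key U hU).2
  have hVmod : ∀ k, 1 ≤ k → ∀ x y : MarkovShift A, (∀ i < k, x.1 i = y.1 i) →
      |V x - V y| ≤ waltersSup f k := by
    intro k hk x y hxy
    have h1 := ((hVt x).sub (hVt y)).abs
    rw [sub_sub_sub_cancel_right] at h1
    refine le_of_tendsto h1 ?_
    filter_upwards [eventually_gt_atTop 1] with β hβ
    have := hreg β hβ k hk x y hxy
    rwa [sub_sub_sub_cancel_right]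
  have hgdiv : ∀ β, 1 < β → ∀ x, gβ β x / β =
      f x + Real.log (h β x) / β - Real.log (h β (shift x)) / β - P β / β := by
    intro β hβ x
    have : β ≠ 0 := by linarith
    rw [hgβ]
    field_simp
  have hpt : ∀ x, Tendsto (fun β => gβ β x / β) atTop (𝓝 (Rm x)) := by
    intro x
    rw [hRm]
    have h1 := (((hVt x).const_add (f x)).sub (hVt (shift x))).sub hPt
    have e : f x + (V x - V x0) - (V (shift x) - V x0) - mf f =
        f x + V x - V (shift x) - mf f := by ring
    rw [e] at h1
    refine h1.congr' ?_
    filter_upwards [eventually_gt_atTop 1] with β hβ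
    rw [hgdiv β hβ]
    ring
  let M : ℕ → ℝ := fun n => 2 * waltersSup f (n - 1) + waltersSup f n
  have hM : Tendsto M atTop (𝓝 0) := by
    have h1 := hWalters.2.comp (tendsto_sub_atTop_nat 1)
    have h2 := (h1.const_mul 2).add hWalters.2
    simpa using h2
  have hgM : ∀ n ≥ 2, ∀ β : ℝ, 1 < β → ∀ x y : MarkovShift A, (∀ i < n, x.1 i = y.1 i) →
      |gβ β x / β - gβ β y / β| ≤ M n := by
    intro n hn β hβ x y hxy
    rw [hgdiv β hβ, hgdiv β hβ]
    have h1 := abs_le.1 (walters_var hWalters (k := n - 1) (by omega) x y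
      fun i hi => hxy i (by omega))
    have h2 := abs_le.1 (hreg β hβ n (by omega) x y hxy)
    have h3 := abs_le.1 (hreg β hβ (n - 1) (by omega) (shift x) (shift y)
      fun i hi => hxy (i + 1) (by omega))
    simp only [M]
    rw [abs_le]
    constructor <;> linarith [h1.1, h1.2, h2.1, h2.2, h3.1, h3.2]
  have hRM : ∀ n ≥ 2, ∀ x y : MarkovShift A, (∀ i < n, x.1 i = y.1 i) → |Rm x - Rm y| ≤ M n := by
    intro n hn x y hxy
    refine le_of_tendsto ((hpt x).sub (hpt y)).abs ?_
    filter_upwards [eventually_gt_atTop 1] with β hβ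
    exact hgM n hn β hβ x y hxy
  refine ⟨?_, M, hM, ⟨2, fun n hn => ⟨hgM n hn, hRM n hn⟩⟩, ?_⟩
  · intro K hK
    rw [← tendstoLocallyUniformlyOn_iff_tendstoUniformlyOn_of_compact hK]
    rw [Metric.tendstoLocallyUniformlyOn_iff]
    intro ε hε x _
    obtain ⟨n, hn2, hn⟩ : ∃ n ≥ 2, M n < ε / 3 := by
      have h1 := hM.eventually (gt_mem_nhds (by positivity : (0 : ℝ) < ε / 3))
      obtain ⟨n, hn⟩ := (h1.and (eventually_ge_atTop 2)).exists
      exact ⟨n, hn.2, hn.1⟩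
    refine ⟨cylOf x n, mem_nhdsWithin_of_mem_nhds (cylOf_mem_nhds x n), ?_⟩
    filter_upwards [eventually_gt_atTop 1,
      (Metric.tendsto_nhds.1 (hpt x)) (ε / 3) (by positivity)] with β hβ hd y hy
    rw [Real.dist_eq, abs_lt] at hd ⊢
    have h1 := abs_le.1 (hgM n hn2 β hβ y x hy)
    have h2 := abs_le.1 (hRM n hn2 y x hy)
    constructor <;> linarith [h1.1, h1.2, h2.1, h2.2, hd.1, hd.2]
  · intro n k hn hk x y hxy
    rw [birkhoff_cob hRm, birkhoff_cob hRm]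
    have h1 : |birkhoff f n x - birkhoff f n y| ≤ varBirk f n (n + k) := by
      refine le_csSup (s := varSet f n (n + k)) ?_ ⟨x, y, hxy, rfl⟩
      have hs : varSet f n (n + k) ⊆ waltersSet f k := fun c hc => ⟨n, hn, hc⟩
      exact (hWalters.1 k hk).mono hs
    have h1 := abs_le.1 h1
    have h2 := abs_le.1 (hVmod (n + k) (by omega) x y hxy)
    have h3 := abs_le.1 (hVmod k hk (shift^[n] x) (shift^[n] y) fun i hi => by
      rw [shift_iter, shift_iter]; exact hxy _ (by omega))
    have h4 := waltersSup_nonneg f (n + k - 1)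
    have h5 := waltersSup_nonneg f (k - 1)
    simp only [M]
    rw [abs_le]
    constructor <;> linarith [h1.1, h1.2, h2.1, h2.2, h3.1, h3.2]

end MarkovShift
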